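/- Suppose that every irreducible Gorenstein polytope of dimension d and degree s with d ≥ 3s is a lattice pyramid. Then every Gorenstein polytope of dimension d and degree s with d ≥ 3s is a lattice pyramid. -/

import Mathlib

open Pointwise

/-- A point of `ℝ^d` is a lattice point if all its coordinates are integers. -/
def IsLatticePt {d : ℕ} (x : Fin d → ℝ) : Prop := ∀ i, ∃ z : ℤ, x i = (z : ℝ)

/-- A lattice polytope is the (non-empty) convex hull of finitely many lattice points. -/
def IsLatticePolytope {d : ℕ} (P : Set (Fin d → ℝ)) : Prop :=
  ∃ V : Finset (Fin d → ℝ), V.Nonempty ∧ (∀ v ∈ V, IsLatticePt v) ∧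
    P = convexHull ℝ (V : Set (Fin d → ℝ))

/-- The dimension of a polytope: the dimension of the direction of its affine hull. -/
noncomputable def polyDim {d : ℕ} (P : Set (Fin d → ℝ)) : ℕ :=
  Module.finrank ℝ (affineSpan ℝ P).direction

/-- A polytope is hollow if its relative interior contains no lattice point. -/
def IsHollow {d : ℕ} (P : Set (Fin d → ℝ)) : Prop :=
  ∀ x ∈ intrinsicInterior ℝ P, ¬ IsLatticePt x

/-- A facet of `P`: a non-empty exposed face of dimension `dim P - 1`. -/
def IsFacet {d : ℕ} (P F : Set (Fin d → ℝ)) : Prop :=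
  IsExposed ℝ P F ∧ F.Nonempty ∧ polyDim F + 1 = polyDim P

/-- An affine functional is integral on `P` if it takes integer values on all
lattice points of the affine hull of `P`. -/
def IsIntegralOn {d : ℕ} (P : Set (Fin d → ℝ)) (u : (Fin d → ℝ) →ᵃ[ℝ] ℝ) : Prop :=
  ∀ y ∈ affineSpan ℝ P, IsLatticePt y → ∃ z : ℤ, u y = (z : ℝ)

/-- `P` is reflexive: there is a lattice point `x` in the relative interior of `P`
such that every facet of `P` has lattice distance one from `x`, i.e. for every facet `F`
there is an integral affine functional that is constant on `F` and exceeds its value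
at `x` by exactly `1`. -/
def IsReflexivePolytope {d : ℕ} (P : Set (Fin d → ℝ)) : Prop :=
  ∃ x ∈ intrinsicInterior ℝ P, IsLatticePt x ∧
    ∀ F : Set (Fin d → ℝ), IsFacet P F →
      ∃ u : (Fin d → ℝ) →ᵃ[ℝ] ℝ, IsIntegralOn P u ∧ ∀ f ∈ F, u f = u x + 1

/-- `P` is Gorenstein if some positive integer multiple `r • P` is reflexive. -/
def IsGorenstein {d : ℕ} (P : Set (Fin d → ℝ)) : Prop :=
  ∃ r : ℕ, 0 < r ∧ IsReflexivePolytope ((r : ℝ) • P)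

/-- `P` is Gorenstein of codegree `r` if `r • P` is reflexive (`r` positive). -/
def IsGorensteinOfCodeg {d : ℕ} (P : Set (Fin d → ℝ)) (r : ℕ) : Prop :=
  0 < r ∧ IsReflexivePolytope ((r : ℝ) • P)

/-- The codegree of `P`: the smallest positive integer `r` such that `r • P` is not hollow. -/
noncomputable def polyCodeg {d : ℕ} (P : Set (Fin d → ℝ)) : ℕ :=
  sInf {r : ℕ | 0 < r ∧ ¬ IsHollow ((r : ℝ) • P)}

/-- The degree of `P`: `dim P + 1 - codeg P`. -/
noncomputable def polyDeg {d : ℕ} (P : Set (Fin d → ℝ)) : ℕ :=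
  polyDim P + 1 - polyCodeg P

/-- Unimodular equivalence of lattice polytopes: an affine map carrying `P` onto `Q`,
with an affine inverse on affine hulls, such that both maps preserve lattice points of
the affine hulls. -/
def LatticeIso {d e : ℕ} (P : Set (Fin d → ℝ)) (Q : Set (Fin e → ℝ)) : Prop :=
  ∃ (f : (Fin d → ℝ) →ᵃ[ℝ] (Fin e → ℝ)) (g : (Fin e → ℝ) →ᵃ[ℝ] (Fin d → ℝ)),
    f '' P = Q ∧ g '' Q = P ∧
    (∀ x ∈ affineSpan ℝ P, g (f x) = x) ∧ (∀ y ∈ affineSpan ℝ Q, f (g y) = y) ∧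
    (∀ x ∈ affineSpan ℝ P, IsLatticePt x → IsLatticePt (f x)) ∧
    (∀ y ∈ affineSpan ℝ Q, IsLatticePt y → IsLatticePt (g y))

/-- The lattice pyramid `conv(P' × {0}, (0,1))` over `P' ⊆ ℝ^m`. -/
def pyramidOver {m : ℕ} (P' : Set (Fin m → ℝ)) : Set (Fin (m + 1) → ℝ) :=
  convexHull ℝ ((fun x => Fin.snoc x (0 : ℝ)) '' P' ∪ {Fin.snoc (0 : Fin m → ℝ) (1 : ℝ)})

/-- `P` is a lattice pyramid if it is a single lattice point or is isomorphic to a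
lattice pyramid over a lattice polytope. -/
def IsLatticePyramid {d : ℕ} (P : Set (Fin d → ℝ)) : Prop :=
  (∃ x : Fin d → ℝ, IsLatticePt x ∧ P = {x}) ∨
  ∃ (m : ℕ) (P' : Set (Fin m → ℝ)), IsLatticePolytope P' ∧ LatticeIso P (pyramidOver P')

/-- The Cayley polytope `P_1 * ⋯ * P_l ⊆ ℝ^{n+l}` of `P_1, …, P_l ⊆ ℝ^n`:
the convex hull of the sets `P_i × {e_i}`. -/
def cayley {n l : ℕ} (P : Fin l → Set (Fin n → ℝ)) : Set (Fin (n + l) → ℝ) :=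
  convexHull ℝ (⋃ i : Fin l, (fun x => Fin.append x (Pi.single i (1 : ℝ))) '' P i)

/-- The Cayley polytope `F * G ⊆ ℝ^{n+2}` of two polytopes `F, G ⊆ ℝ^n`. -/
def cayleyTwo {n : ℕ} (F G : Set (Fin n → ℝ)) : Set (Fin (n + 2) → ℝ) :=
  convexHull ℝ
    ((fun x => Fin.append x ![(1 : ℝ), 0]) '' F ∪ (fun x => Fin.append x ![(0 : ℝ), 1]) '' G)

/-- `P` is a Cayley join of `F` and `G` if `P ≅ F * G` and `dim F + dim G = dim P - 1`. -/
def IsCayleyJoin {d n : ℕ} (P : Set (Fin d → ℝ)) (F G : Set (Fin n → ℝ)) : Prop :=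
  LatticeIso P (cayleyTwo F G) ∧ polyDim F + polyDim G + 1 = polyDim P

/-- `P` is reducible with factors `F` and `G`: a Cayley join with
`codeg F + codeg G = codeg P`. -/
def IsReducibleWith {d n : ℕ} (P : Set (Fin d → ℝ)) (F G : Set (Fin n → ℝ)) : Prop :=
  IsCayleyJoin P F G ∧ polyCodeg F + polyCodeg G = polyCodeg P

/-- `P` is reducible: it is a single lattice point (by convention) or is reducible
with some factors `F` and `G` which are lattice polytopes. -/
def IsReducible {d : ℕ} (P : Set (Fin d → ℝ)) : Prop :=
  (∃ x : Fin d → ℝ, IsLatticePt x ∧ P = {x}) ∨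
  ∃ (n : ℕ) (F G : Set (Fin n → ℝ)), IsLatticePolytope F ∧ IsLatticePolytope G ∧
    IsReducibleWith P F G

/-- `P` is a Cayley polytope: a single lattice point, or isomorphic to a Cayley polytope
of `l > 1` lattice polytopes. -/
def IsCayleyPolytope {d : ℕ} (P : Set (Fin d → ℝ)) : Prop :=
  (∃ x : Fin d → ℝ, IsLatticePt x ∧ P = {x}) ∨
  ∃ (n l : ℕ) (Q : Fin l → Set (Fin n → ℝ)), 1 < l ∧ (∀ i, IsLatticePolytope (Q i)) ∧
    LatticeIso P (cayley Q)

/-- `P` is IDP if for every `k ≥ 2` every lattice point of `k • P` is a sum of `k`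
lattice points of `P`. -/
def IsIDP {d : ℕ} (P : Set (Fin d → ℝ)) : Prop :=
  ∀ k : ℕ, 2 ≤ k → ∀ x : Fin d → ℝ, IsLatticePt x → x ∈ (k : ℝ) • P →
    ∃ p : Fin k → (Fin d → ℝ), (∀ i, p i ∈ P ∧ IsLatticePt (p i)) ∧ x = ∑ i, p i

/-- The standard simplex `Δ_s = conv(0, e_1, …, e_s) ⊆ ℝ^s`. -/
def stdSimplexLP (s : ℕ) : Set (Fin s → ℝ) :=
  convexHull ℝ (insert 0 (Set.range fun i : Fin s => Pi.single i (1 : ℝ)))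

/-- The product of `F ⊆ ℝ^m` and `G ⊆ ℝ^n` inside `ℝ^{m+n}`. -/
def prodPoly {m n : ℕ} (F : Set (Fin m → ℝ)) (G : Set (Fin n → ℝ)) : Set (Fin (m + n) → ℝ) :=
  (fun p : (Fin m → ℝ) × (Fin n → ℝ) => Fin.append p.1 p.2) '' (F ×ˢ G)

/-- The free join `conv(F × 0 × {0} ∪ 0 × G × {1}) ⊆ ℝ^m × ℝ^n × ℝ`. -/
def freeJoin {m n : ℕ} (F : Set (Fin m → ℝ)) (G : Set (Fin n → ℝ)) :
    Set (Fin (m + n + 1) → ℝ) :=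
  convexHull ℝ
    ((fun x => Fin.snoc (Fin.append x (0 : Fin n → ℝ)) (0 : ℝ)) '' F ∪
     (fun y => Fin.snoc (Fin.append (0 : Fin m → ℝ) y) (1 : ℝ)) '' G)

/-!
Suppose that a Gorenstein polytope `P` is reducible with factors `F` and `G`, and choose lattice
points `x` and `y` in the relative interiors of `codeg F • F` and `codeg G • G`. If `r • P` is
reflexive, with `r = codeg P + k`, then `x + y + k • p` lies in the relative interior of `r • P` for
every lattice point `p` of `P`. A reflexive polytope has only one interior lattice point, so `k = 0`
and `x + y` is the centre of `r • P`. Because `F` and `G` have independent directions, every facet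
`Φ` of `F` spans a facet of `P` together with `G`. The functional witnessing that this facet has
distance one from `x + y` is constant on `Φ ∪ G`, so its restriction to `F` witnesses the same for
`Φ` and `x`. Hence `codeg F • F` is reflexive with centre `x`.

If moreover `F` is a pyramid with apex `v` over a facet `B`, then the functional obtained from
`Φ = B` shows that `v` has lattice distance one from `B ∪ G`, so `P` is a pyramid with apex `v`.
Finally `deg P = deg F + deg G` and `dim P = dim F + dim G + 1`, so the inequality between dimension
and degree passes from `P` to one of its factors, and the theorem follows by induction on the
dimension.
-/

section IntrinsicInterior

variable {E : Type*} [NormedAddCommGroup E] [NormedSpace ℝ E] {s : Set E} {x y : E}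

/-- The translate `s - x` as a subset of the direction of the affine span of `s`. It turns
statements on intrinsic interiors into statements on interiors. -/
def translateInDirection (s : Set E) (x : E) : Set (affineSpan ℝ s).direction :=
  {w | (w : E) + x ∈ s}

theorem convex_translateInDirection (hs : Convex ℝ s) (x : E) :
    Convex ℝ (translateInDirection s x) :=
  (hs.translate_preimage_left x).linear_preimage (affineSpan ℝ s).direction.subtype

theorem add_mem_intrinsicInterior_iff (hx : x ∈ s) (w : (affineSpan ℝ s).direction) :
    (w : E) + x ∈ intrinsicInterior ℝ s ↔ w ∈ interior (translateInDirection s x) := by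
  let x' : affineSpan ℝ s := ⟨x, subset_affineSpan ℝ s hx⟩
  have : Nonempty (affineSpan ℝ s) := ⟨x'⟩
  let e : (affineSpan ℝ s).direction ≃ₜ affineSpan ℝ s :=
    (AffineIsometryEquiv.vaddConst ℝ x').toHomeomorph
  have h : translateInDirection s x = e ⁻¹' (Subtype.val ⁻¹' s) := rfl
  rw [h, ← e.preimage_interior, Set.mem_preimage, ← Subtype.val_injective.mem_set_image (a := e w)]
  rfl

theorem mem_intrinsicInterior_iff_zero_mem_interior (hx : x ∈ s) :
    x ∈ intrinsicInterior ℝ s ↔ 0 ∈ interior (translateInDirection s x) := by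
  simpa only [ZeroMemClass.coe_zero, zero_add] using add_mem_intrinsicInterior_iff hx 0

theorem sub_mem_direction_affineSpan (hx : x ∈ s) (hy : y ∈ s) :
    y - x ∈ (affineSpan ℝ s).direction :=
  AffineSubspace.vsub_mem_direction (subset_affineSpan ℝ s hy) (subset_affineSpan ℝ s hx)

theorem exists_add_smul_sub_mem (hx : x ∈ intrinsicInterior ℝ s) (hy : y ∈ s) :
    ∃ ε > (0 : ℝ), x + ε • (x - y) ∈ s := by
  have hxs := intrinsicInterior_subset hx
  let w : (affineSpan ℝ s).direction := ⟨x - y, sub_mem_direction_affineSpan hy hxs⟩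
  have hlim : Filter.Tendsto (fun ε : ℝ => ε • w) (nhds 0) (nhds 0) := by
    simpa using (Filter.tendsto_id (α := ℝ) (x := nhds 0)).smul_const w
  have hnhds : ∀ᶠ ε : ℝ in nhds 0, ε • w ∈ translateInDirection s x :=
    hlim (mem_interior_iff_mem_nhds.1 ((mem_intrinsicInterior_iff_zero_mem_interior hxs).1 hx))
  obtain ⟨ε, hmem, hε⟩ :=
    ((hnhds.filter_mono nhdsWithin_le_nhds).and (self_mem_nhdsWithin (s := Set.Ioi 0))).exists
  exact ⟨ε, hε, by rw [add_comm]; exact hmem⟩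

variable [FiniteDimensional ℝ E]

theorem interior_translateInDirection_nonempty (hs : Convex ℝ s) (hx : x ∈ s) :
    (interior (translateInDirection s x)).Nonempty := by
  obtain ⟨y, hy⟩ := Set.Nonempty.intrinsicInterior hs ⟨x, hx⟩
  refine ⟨⟨y - x, sub_mem_direction_affineSpan hx (intrinsicInterior_subset hy)⟩, ?_⟩
  rw [← add_mem_intrinsicInterior_iff hx]
  simpa only [sub_add_cancel] using hy

theorem mem_intrinsicInterior_iff_forall_exists (hs : Convex ℝ s) :
    x ∈ intrinsicInterior ℝ s ↔ x ∈ s ∧ ∀ y ∈ s, ∃ ε > (0 : ℝ), x + ε • (x - y) ∈ s := by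
  refine ⟨fun hx => ⟨intrinsicInterior_subset hx, fun y => exists_add_smul_sub_mem hx⟩, ?_⟩
  rintro ⟨hx, h⟩
  obtain ⟨w, hw⟩ := interior_translateInDirection_nonempty hs hx
  obtain ⟨ε, hε, hmem⟩ := h (w + x) (interior_subset hw : w ∈ translateInDirection s x)
  have hneg : -(ε • w) ∈ translateInDirection s x := by
    simp only [sub_add_cancel_right, smul_neg] at hmem
    rwa [add_comm] at hmem
  rw [mem_intrinsicInterior_iff_zero_mem_interior hx]
  refine (convex_translateInDirection hs x).openSegment_interior_self_subset_interior hw hneg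
    ⟨ε / (1 + ε), 1 / (1 + ε), by positivity, by positivity, by field_simp; ring, ?_⟩
  module

theorem exists_affineMap_nonneg_of_notMem_intrinsicInterior (hs : Convex ℝ s) (hx : x ∈ s)
    (hx' : x ∉ intrinsicInterior ℝ s) :
    ∃ ψ : E →ᵃ[ℝ] ℝ, (∀ q ∈ s, 0 ≤ ψ q) ∧ ψ x = 0 ∧ ∃ q ∈ s, 0 < ψ q := by
  rw [mem_intrinsicInterior_iff_zero_mem_interior hx] at hx'
  obtain ⟨f, hf, hle⟩ := geometric_hahn_banach_of_nonempty_interior_point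
    (convex_translateInDirection hs x) hx' (interior_translateInDirection_nonempty hs hx)
  obtain ⟨l, hl⟩ := LinearMap.exists_extend (f : (affineSpan ℝ s).direction →ₗ[ℝ] ℝ)
  let ψ : E →ᵃ[ℝ] ℝ := (-l).toAffineMap.comp (AffineMap.id ℝ E - AffineMap.const ℝ E x)
  have hψ : ∀ w : (affineSpan ℝ s).direction, ψ (w + x) = -f w := fun w => by
    simpa [ψ] using LinearMap.congr_fun hl w
  refine ⟨ψ, fun q hq => ?_, by simp [ψ], ?_⟩
  · let w : (affineSpan ℝ s).direction := ⟨q - x, sub_mem_direction_affineSpan hx hq⟩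
    have hw : (w : E) + x = q := sub_add_cancel q x
    have hfw := hle w (by rw [← hw] at hq; exact hq)
    rw [← hw, hψ]
    simpa using hfw
  · by_contra! hψ'
    have hker : translateInDirection s x ⊆ (f : (affineSpan ℝ s).direction →ₗ[ℝ] ℝ).ker :=
      fun w hw => le_antisymm (by simpa using hle w hw) (by simpa [hψ] using hψ' _ hw)
    have htop := Submodule.eq_top_of_nonempty_interior' _
      ((interior_translateInDirection_nonempty hs hx).mono (interior_mono hker))
    exact hf (ContinuousLinearMap.coe_injective (LinearMap.ker_eq_top.1 htop))

end IntrinsicInterior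

section Weights

variable {E : Type*} [NormedAddCommGroup E] [NormedSpace ℝ E]
  {ι : Type*} [Fintype ι] {p : ι → E} {r : ℝ} {x : E}

theorem mem_smul_convexHull_range_iff (hr : 0 < r) :
    x ∈ r • convexHull ℝ (Set.range p) ↔
      ∃ c : ι → ℝ, (∀ i, 0 ≤ c i) ∧ ∑ i, c i = r ∧ ∑ i, c i • p i = x := by
  classical
  have key : convexHull ℝ (Set.range p) = Fintype.linearCombination ℝ p '' stdSimplex ℝ ι := by
    rw [← convexHull_rangle_single_eq_stdSimplex, LinearMap.image_convexHull, ← Set.range_comp]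
    congr 2
    ext i
    simp [Fintype.linearCombination_apply]
  rw [key]
  constructor
  · rintro ⟨y, ⟨c, hc, rfl⟩, rfl⟩
    exact ⟨fun i => r * c i, fun i => mul_nonneg hr.le (hc.1 i),
      by rw [← Finset.mul_sum, hc.2, mul_one],
      by simp [Fintype.linearCombination_apply, Finset.smul_sum, mul_smul]⟩
  · rintro ⟨c, hc, hs, rfl⟩
    refine ⟨_, ⟨fun i => c i / r, ⟨fun i => div_nonneg (hc i) hr.le, ?_⟩, rfl⟩, ?_⟩
    · rw [← Finset.sum_div, hs, div_self hr.ne']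
    · simp only [Fintype.linearCombination_apply, Finset.smul_sum, smul_smul,
        mul_div_cancel₀ _ hr.ne']

variable [FiniteDimensional ℝ E]

theorem mem_intrinsicInterior_smul_convexHull_range_of_pos (hr : 0 < r) {c : ι → ℝ}
    (hc : ∀ i, 0 < c i) (hsum : ∑ i, c i = r) :
    ∑ i, c i • p i ∈ intrinsicInterior ℝ (r • convexHull ℝ (Set.range p)) := by
  rw [mem_intrinsicInterior_iff_forall_exists ((convex_convexHull ℝ _).smul r)]
  refine ⟨(mem_smul_convexHull_range_iff hr).2 ⟨c, fun i => (hc i).le, hsum, rfl⟩, fun y hy => ?_⟩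
  obtain ⟨d, -, hdr, rfl⟩ := (mem_smul_convexHull_range_iff hr).1 hy
  have hpos : ∀ᶠ ε in nhds (0 : ℝ), ∀ i, 0 < c i + ε * (c i - d i) :=
    Filter.eventually_all.2 fun i =>
      ((by fun_prop : Continuous fun ε : ℝ => c i + ε * (c i - d i)).tendsto' 0 (c i)
        (by simp)).eventually_const_lt (hc i)
  obtain ⟨ε, hmem, hε⟩ :=
    ((hpos.filter_mono nhdsWithin_le_nhds).and (self_mem_nhdsWithin (s := Set.Ioi 0))).exists
  refine ⟨ε, hε, (mem_smul_convexHull_range_iff hr).2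
    ⟨fun i => c i + ε * (c i - d i), fun i => (hmem i).le, ?_, ?_⟩⟩
  · rw [Finset.sum_add_distrib, ← Finset.mul_sum, Finset.sum_sub_distrib, hsum, hdr]
    ring
  · simp only [add_smul, mul_smul, sub_smul, Finset.sum_add_distrib, ← Finset.smul_sum,
      Finset.sum_sub_distrib]

theorem mem_intrinsicInterior_smul_convexHull_range_iff [Nonempty ι] (hr : 0 < r) :
    x ∈ intrinsicInterior ℝ (r • convexHull ℝ (Set.range p)) ↔
      ∃ c : ι → ℝ, (∀ i, 0 < c i) ∧ ∑ i, c i = r ∧ ∑ i, c i • p i = x := by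
  refine ⟨fun hx => ?_, ?_⟩
  · have : (0 : ℝ) < Fintype.card ι := by exact_mod_cast Fintype.card_pos
    have hbary : ∑ i, (r / Fintype.card ι) • p i ∈ r • convexHull ℝ (Set.range p) :=
      (mem_smul_convexHull_range_iff hr).2
        ⟨fun _ => r / Fintype.card ι, fun _ => by positivity, by simp; field_simp, rfl⟩
    obtain ⟨ε, hε, hmem⟩ := exists_add_smul_sub_mem hx hbary
    obtain ⟨c, hc, hs, he⟩ := (mem_smul_convexHull_range_iff hr).1 hmem
    refine ⟨fun i => (1 / (1 + ε)) * (c i + ε * (r / Fintype.card ι)), fun i => ?_, ?_, ?_⟩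
    · have := hc i
      positivity
    · rw [← Finset.mul_sum, Finset.sum_add_distrib, hs]
      simp only [Finset.sum_const, Finset.card_univ, nsmul_eq_mul]
      field_simp
    · simp only [mul_smul, add_smul, ← Finset.smul_sum, Finset.sum_add_distrib, he]
      match_scalars <;> field_simp
      ring
  · rintro ⟨c, hc, hs, rfl⟩
    exact mem_intrinsicInterior_smul_convexHull_range_of_pos hr hc hs

theorem sum_mem_intrinsicInterior_card_smul_convexHull_range [Nonempty ι] :
    ∑ i, p i ∈ intrinsicInterior ℝ ((Fintype.card ι : ℝ) • convexHull ℝ (Set.range p)) := by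
  simpa using mem_intrinsicInterior_smul_convexHull_range_of_pos (p := p) (c := fun _ => 1)
    (r := Fintype.card ι) (by exact_mod_cast Fintype.card_pos) (fun _ => one_pos) (by simp)

end Weights

section InteriorSums

variable {E : Type*} [NormedAddCommGroup E] [NormedSpace ℝ E] [FiniteDimensional ℝ E]
  {ι κ : Type*} [Finite ι] [Nonempty ι] [Finite κ] [Nonempty κ] {p : ι → E} {q : κ → E} {a b : ℝ}
  {x y : E}

theorem add_mem_intrinsicInterior_smul_convexHull_range (ha : 0 < a) (hb : 0 < b)
    (hx : x ∈ intrinsicInterior ℝ (a • convexHull ℝ (Set.range p)))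
    (hy : y ∈ b • convexHull ℝ (Set.range p)) :
    x + y ∈ intrinsicInterior ℝ ((a + b) • convexHull ℝ (Set.range p)) := by
  cases nonempty_fintype ι
  obtain ⟨c, hc, hca, rfl⟩ := (mem_intrinsicInterior_smul_convexHull_range_iff ha).1 hx
  obtain ⟨d, hd, hdb, rfl⟩ := (mem_smul_convexHull_range_iff hb).1 hy
  rw [← Finset.sum_add_distrib]
  simp only [← add_smul]
  exact mem_intrinsicInterior_smul_convexHull_range_of_pos (add_pos ha hb)
    (fun i => add_pos_of_pos_of_nonneg (hc i) (hd i)) (by rw [Finset.sum_add_distrib, hca, hdb])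

theorem add_mem_intrinsicInterior_smul_convexHull_union (ha : 0 < a)
    (hb : 0 < b) (hx : x ∈ intrinsicInterior ℝ (a • convexHull ℝ (Set.range p)))
    (hy : y ∈ intrinsicInterior ℝ (b • convexHull ℝ (Set.range q))) :
    x + y ∈ intrinsicInterior ℝ ((a + b) • convexHull ℝ (Set.range p ∪ Set.range q)) := by
  cases nonempty_fintype ι
  cases nonempty_fintype κ
  obtain ⟨c, hc, hca, rfl⟩ := (mem_intrinsicInterior_smul_convexHull_range_iff ha).1 hx
  obtain ⟨d, hd, hdb, rfl⟩ := (mem_intrinsicInterior_smul_convexHull_range_iff hb).1 hy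
  rw [← Set.Sum.elim_range]
  simpa using mem_intrinsicInterior_smul_convexHull_range_of_pos (p := Sum.elim p q)
    (c := Sum.elim c d) (add_pos ha hb) (Sum.forall.2 ⟨hc, hd⟩) (by simp [hca, hdb])

end InteriorSums

section Faces

variable {E : Type*} [NormedAddCommGroup E] [NormedSpace ℝ E] {s P F : Set E} {x y : E}

theorem affineMap_add_smul_sub (φ : E →ᵃ[ℝ] ℝ) (x y z : E) (c : ℝ) :
    φ (x + c • (y - z)) = φ x + c * (φ y - φ z) := by
  rw [add_comm, ← vadd_eq_add, φ.map_vadd, map_smul, ← vsub_eq_sub y z, φ.linearMap_vsub]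
  simp only [vsub_eq_sub, smul_eq_mul, vadd_eq_add, add_comm]

theorem nonneg_on_convexHull {φ : E →ᵃ[ℝ] ℝ} (h : ∀ v ∈ s, 0 ≤ φ v) :
    ∀ q ∈ convexHull ℝ s, 0 ≤ φ q :=
  convexHull_min (t := φ ⁻¹' Set.Ici 0) h ((convex_Ici 0).affine_preimage φ)

theorem eq_zero_on_convexHull {φ : E →ᵃ[ℝ] ℝ} (h : ∀ v ∈ s, φ v = 0) :
    ∀ q ∈ convexHull ℝ s, φ q = 0 :=
  convexHull_min (t := φ ⁻¹' {0}) h ((convex_singleton 0).affine_preimage φ)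

theorem convexHull_inter_zeros {φ : E →ᵃ[ℝ] ℝ} (h : ∀ v ∈ s, 0 ≤ φ v) :
    {q ∈ convexHull ℝ s | φ q = 0} = convexHull ℝ {v ∈ s | φ v = 0} := by
  refine Set.Subset.antisymm (fun q ⟨hq, hq0⟩ => ?_) fun q hq =>
    ⟨convexHull_mono (Set.sep_subset _ _) hq, eq_zero_on_convexHull (fun v hv => hv.2) q hq⟩
  have hconv : Convex ℝ {q | 0 ≤ φ q ∧ (φ q = 0 → q ∈ convexHull ℝ {v ∈ s | φ v = 0})} := by
    rw [convex_iff_forall_pos]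
    rintro u ⟨hu, hu0⟩ v ⟨hv, hv0⟩ a b ha hb hab
    have hφ : φ (a • u + b • v) = a * φ u + b * φ v := Convex.combo_affine_apply hab
    simp only [Set.mem_ofPred_eq, hφ]
    refine ⟨by positivity, fun h0 => ?_⟩
    have hu' : φ u = 0 := by nlinarith [mul_nonneg ha.le hu, mul_nonneg hb.le hv]
    have hv' : φ v = 0 := by nlinarith [mul_nonneg ha.le hu, mul_nonneg hb.le hv]
    exact convex_convexHull ℝ _ (hu0 hu') (hv0 hv') ha.le hb.le hab
  have hsub : s ⊆ {q | 0 ≤ φ q ∧ (φ q = 0 → q ∈ convexHull ℝ {v ∈ s | φ v = 0})} :=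
    fun v hv => ⟨h v hv, fun hv0 => subset_convexHull ℝ _ ⟨hv, hv0⟩⟩
  exact (convexHull_min hsub hconv hq).2 hq0

theorem pos_of_mem_intrinsicInterior {φ : E →ᵃ[ℝ] ℝ} (h : ∀ q ∈ P, 0 ≤ φ q) (hx : x ∈ P)
    (hφx : 0 < φ x) (hy : y ∈ intrinsicInterior ℝ P) : 0 < φ y := by
  obtain ⟨ε, hε, hmem⟩ := exists_add_smul_sub_mem hy hx
  have := h _ hmem
  rw [affineMap_add_smul_sub] at this
  nlinarith [h y (intrinsicInterior_subset hy), mul_pos hε hφx]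

theorem exists_add_smul_sub_mem_diff_intrinsicInterior (hP : IsCompact P) (hx : x ∈ P)
    (hy : y ∈ P) (hxy : x ≠ y) :
    ∃ t : ℝ, 1 ≤ t ∧ x + t • (y - x) ∈ P \ intrinsicInterior ℝ P := by
  have hcompact : IsCompact {t : ℝ | x + t • (y - x) ∈ P} :=
    ((Homeomorph.addLeft x).isClosedEmbedding.comp
      (isClosedEmbedding_smul_left (sub_ne_zero.2 hxy.symm))).isCompact_preimage hP
  obtain ⟨t, ht, hmax⟩ := hcompact.exists_isGreatest ⟨0, by simpa using hx⟩
  have ht1 : 1 ≤ t := hmax (by simpa using hy)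
  refine ⟨t, ht1, ht, fun hri => ?_⟩
  obtain ⟨ε, hε, hmem⟩ := exists_add_smul_sub_mem hri hx
  have hle : (1 + ε) * t ≤ t := hmax (by
    rw [Set.mem_ofPred_eq]
    convert hmem using 1
    module)
  nlinarith

theorem exists_affineMap_neg_of_notMem_affineSpan (hx : x ∉ affineSpan ℝ s) :
    ∃ φ : E →ᵃ[ℝ] ℝ, (∀ v ∈ s, φ v = 0) ∧ φ x < 0 := by
  obtain rfl | ⟨v₀, hv₀⟩ := s.eq_empty_or_nonempty
  · exact ⟨AffineMap.const ℝ E (-1), by simp, by simp⟩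
  have hx' : x - v₀ ∉ vectorSpan ℝ s := fun h => hx (by
    rw [← direction_affineSpan] at h
    simpa using AffineSubspace.vadd_mem_of_mem_direction h (subset_affineSpan ℝ s hv₀))
  obtain ⟨g, hgx, hg⟩ := Submodule.exists_le_ker_of_notMem hx'
  refine ⟨(-g (x - v₀) • g).toAffineMap.comp (AffineMap.id ℝ E - AffineMap.const ℝ E v₀),
    fun v hv => ?_, ?_⟩
  · have hgv : g (v - v₀) = 0 := hg (vsub_mem_vectorSpan ℝ hv hv₀)
    simp [hgv]
  · change -g (x - v₀) * g (x - v₀) < 0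
    linarith [mul_self_pos.2 hgx]

theorem notMem_affineSpan_of_eq_zero {φ : E →ᵃ[ℝ] ℝ} (h : ∀ v ∈ s, φ v = 0) (hx : φ x ≠ 0) :
    x ∉ affineSpan ℝ s := fun hmem =>
  hx (AffineMap.eqOn_affineSpan (g := AffineMap.const ℝ E 0) h hmem)

theorem exists_affineMap_of_isExposed (h : IsExposed ℝ P F) (hF : F.Nonempty) :
    ∃ φ : E →ᵃ[ℝ] ℝ, (∀ q ∈ P, 0 ≤ φ q) ∧ F = {q ∈ P | φ q = 0} := by
  obtain ⟨l, rfl⟩ := h hF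
  obtain ⟨w, hw, hmax⟩ := hF
  refine ⟨AffineMap.const ℝ E (l w) - (l : E →ₗ[ℝ] ℝ).toAffineMap, fun q hq => by
    simpa using hmax q hq, Set.ext fun q => and_congr_right fun hq => ?_⟩
  simp only [AffineMap.coe_sub, Pi.sub_apply, AffineMap.const_apply, LinearMap.coe_toAffineMap,
    ContinuousLinearMap.coe_coe, sub_eq_zero]
  exact ⟨fun h => le_antisymm (h w hw) (hmax q hq), fun h r hr => h ▸ hmax r hr⟩

theorem isExposed_zeros [FiniteDimensional ℝ E] {φ : E →ᵃ[ℝ] ℝ} (h : ∀ q ∈ P, 0 ≤ φ q) :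
    IsExposed ℝ P {q ∈ P | φ q = 0} := by
  rintro ⟨w, hw, hw0⟩
  refine ⟨-LinearMap.toContinuousLinearMap φ.linear, Set.ext fun q =>
    and_congr_right fun hq => ?_⟩
  have hle : ∀ r, (-LinearMap.toContinuousLinearMap φ.linear) r ≤
      (-LinearMap.toContinuousLinearMap φ.linear) q ↔ φ q ≤ φ r := fun r => by
    have := φ.linearMap_vsub q r
    simp only [vsub_eq_sub, map_sub] at this
    simp only [neg_apply, LinearMap.coe_toContinuousLinearMap', neg_le_neg_iff]
    constructor <;> intro <;> linarith
  simp only [hle]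
  exact ⟨fun h0 r hr => h0 ▸ h r hr, fun h0 => le_antisymm (hw0 ▸ h0 w hw) (h q hq)⟩

end Faces

section Tilt

theorem exists_add_mul_nonneg_and_eq_zero {ι : Type*} {s : Set ι} (hs : s.Finite) {l f : ι → ℝ}
    (hl : ∀ i ∈ s, 0 ≤ l i) (hf : ∃ i ∈ s, f i < 0) :
    ∃ t, (∀ i ∈ s, 0 ≤ l i + t * f i) ∧ ∃ i ∈ s, f i < 0 ∧ l i + t * f i = 0 := by
  obtain ⟨j, ⟨hj, hfj⟩, hmin⟩ := Set.exists_min_image {i ∈ s | f i < 0} (fun i => l i / -f i)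
    (hs.subset (Set.sep_subset _ _)) hf
  refine ⟨l j / -f j, fun i hi => ?_, j, hj, hfj, by field_simp [hfj.ne]; ring⟩
  obtain hfi | hfi := lt_or_ge (f i) 0
  · have := hmin i ⟨hi, hfi⟩
    rw [le_div_iff₀ (neg_pos.2 hfi)] at this
    linarith
  · have : 0 ≤ l j / -f j := div_nonneg (hl j hj) (neg_pos.2 hfj).le
    nlinarith [hl i hi, mul_nonneg this hfi]

end Tilt

section Extension

variable {E : Type*} [AddCommGroup E] [Module ℝ E] {F G : Set E}

theorem exists_affineMap_eqOn_and_eq_zero {α : E →ᵃ[ℝ] ℝ}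
    (hFG : Disjoint (vectorSpan ℝ F) (vectorSpan ℝ G)) (hF : F.Nonempty)
    (hG : G.Nonempty) (hαF : ∀ v ∈ F, α v = 1) (hαG : ∀ v ∈ G, α v = 0) (φ : E →ᵃ[ℝ] ℝ) :
    ∃ ψ : E →ᵃ[ℝ] ℝ, (∀ v ∈ F, ψ v = φ v) ∧ ∀ v ∈ G, ψ v = 0 := by
  obtain ⟨f, hf⟩ := hF
  obtain ⟨g, hg⟩ := hG
  obtain ⟨W, hFW, hWG⟩ := hFG.exists_isCompl
  let L : E →ₗ[ℝ] ℝ := φ.linear ∘ₗ W.projection _ hWG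
  have hLF : ∀ v ∈ F, L v - L f = φ v - φ f := fun v hv => by
    rw [← map_sub, ← vsub_eq_sub v f, ← vsub_eq_sub (φ v), ← φ.linearMap_vsub]
    exact congrArg φ.linear
      (Submodule.projection_apply_of_mem_left hWG (hFW (vsub_mem_vectorSpan ℝ hv hf)))
  have hLG : ∀ v ∈ G, L v = L g := fun v hv => by
    rw [← sub_eq_zero, ← map_sub, ← vsub_eq_sub v g]
    exact (congrArg φ.linear ((Submodule.projection_apply_eq_zero_iff hWG).2
      (vsub_mem_vectorSpan ℝ hv hg))).trans (map_zero _)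
  refine ⟨L.toAffineMap - AffineMap.const ℝ E (L g) - (L f - L g - φ f) • α,
    fun v hv => ?_, fun v hv => ?_⟩
  · simp [hαF v hv]
    linarith [hLF v hv]
  · simp [hαG v hv, hLG v hv]

end Extension

section Dimension

variable {N : ℕ} {s t F G : Set (Fin N → ℝ)} {x : Fin N → ℝ}

theorem polyDim_eq_finrank_vectorSpan : polyDim s = Module.finrank ℝ (vectorSpan ℝ s) := by
  rw [polyDim, direction_affineSpan]

theorem polyDim_convexHull : polyDim (convexHull ℝ s) = polyDim s := by
  rw [polyDim, affineSpan_convexHull, polyDim]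

theorem polyDim_smul {c : ℝ} (hc : c ≠ 0) : polyDim (c • s) = polyDim s := by
  rw [polyDim, ← AffineSubspace.smul_span, AffineSubspace.direction_smul hc, polyDim]

theorem affineSpan_eq_of_polyDim_le (hs : s.Nonempty) (hst : s ⊆ affineSpan ℝ t)
    (h : polyDim t ≤ polyDim s) : affineSpan ℝ s = affineSpan ℝ t := by
  have hle : affineSpan ℝ s ≤ affineSpan ℝ t := affineSpan_le.2 hst
  exact AffineSubspace.eq_of_direction_eq_of_nonempty_of_le
    (Submodule.eq_of_le_of_finrank_le (AffineSubspace.direction_le hle) h)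
    ((affineSpan_nonempty ℝ).2 hs) hle

theorem vectorSpan_le_ker_linear {φ : (Fin N → ℝ) →ᵃ[ℝ] ℝ} {c : ℝ} (h : ∀ v ∈ s, φ v = c) :
    vectorSpan ℝ s ≤ φ.linear.ker := by
  rw [vectorSpan_def, Submodule.span_le]
  rintro _ ⟨v, hv, w, hw, rfl⟩
  rw [SetLike.mem_coe, LinearMap.mem_ker, AffineMap.linearMap_vsub, h v hv, h w hw, vsub_self]

theorem polyDim_union {φ : (Fin N → ℝ) →ᵃ[ℝ] ℝ} {c : ℝ} (hc : c ≠ 0) (hF : F.Nonempty)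
    (hG : G.Nonempty) (hφF : ∀ v ∈ F, φ v = c) (hφG : ∀ v ∈ G, φ v = 0) :
    polyDim (F ∪ G) =
      Module.finrank ℝ (vectorSpan ℝ F ⊔ vectorSpan ℝ G : Submodule ℝ (Fin N → ℝ)) + 1 := by
  obtain ⟨f, hf⟩ := hF
  obtain ⟨g, hg⟩ := hG
  rw [polyDim, AffineSubspace.span_union, AffineSubspace.direction_sup (subset_affineSpan ℝ F hf)
    (subset_affineSpan ℝ G hg), direction_affineSpan, direction_affineSpan]
  refine Submodule.finrank_sup_span_singleton fun hmem => hc ?_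
  have h := sup_le (vectorSpan_le_ker_linear hφF) (vectorSpan_le_ker_linear hφG) hmem
  rw [LinearMap.mem_ker, AffineMap.linearMap_vsub, hφG g hg, hφF f hf, vsub_eq_sub] at h
  simpa using h

theorem polyDim_union_eq_add_iff_disjoint {φ : (Fin N → ℝ) →ᵃ[ℝ] ℝ} {c : ℝ} (hc : c ≠ 0)
    (hF : F.Nonempty) (hG : G.Nonempty) (hφF : ∀ v ∈ F, φ v = c) (hφG : ∀ v ∈ G, φ v = 0) :
    polyDim (F ∪ G) = polyDim F + polyDim G + 1 ↔
      Disjoint (vectorSpan ℝ F) (vectorSpan ℝ G) := by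
  have h := Submodule.finrank_sup_add_finrank_inf_eq (vectorSpan ℝ F) (vectorSpan ℝ G)
  rw [polyDim_union hc hF hG hφF hφG, polyDim_eq_finrank_vectorSpan, polyDim_eq_finrank_vectorSpan,
    disjoint_iff, ← Submodule.finrank_eq_zero]
  omega

theorem polyDim_insert (hs : s.Nonempty) (hx : x ∉ affineSpan ℝ s) :
    polyDim (insert x s) = polyDim s + 1 := by
  obtain ⟨φ, hφs, hφx⟩ := exists_affineMap_neg_of_notMem_affineSpan hx
  rw [Set.insert_eq, polyDim_union hφx.ne (Set.singleton_nonempty x) hs (by simp) hφs,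
    vectorSpan_singleton, bot_sup_eq, polyDim_eq_finrank_vectorSpan]

end Dimension

section Facet

variable {N : ℕ} {P Φ : Set (Fin N → ℝ)} {s : Set (Fin N → ℝ)} {x : Fin N → ℝ}

theorem IsFacet.subset (h : IsFacet P Φ) : Φ ⊆ P := h.1.subset

theorem isFacet_iff_exists_affineMap :
    IsFacet P Φ ↔ Φ.Nonempty ∧ polyDim Φ + 1 = polyDim P ∧
      ∃ ψ : (Fin N → ℝ) →ᵃ[ℝ] ℝ, (∀ q ∈ P, 0 ≤ ψ q) ∧ Φ = {q ∈ P | ψ q = 0} := by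
  refine ⟨fun ⟨he, hne, hd⟩ => ⟨hne, hd, exists_affineMap_of_isExposed he hne⟩, ?_⟩
  rintro ⟨hne, hd, ψ, hψ, rfl⟩
  exact ⟨isExposed_zeros hψ, hne, hd⟩

theorem IsFacet.affineSpan_insert (h : IsFacet P Φ) (hx : x ∈ P) (hxΦ : x ∉ affineSpan ℝ Φ) :
    affineSpan ℝ (insert x Φ) = affineSpan ℝ P :=
  affineSpan_eq_of_polyDim_le (Set.insert_nonempty x Φ)
    ((Set.insert_subset hx h.subset).trans (subset_affineSpan ℝ P))
    (by rw [polyDim_insert h.2.1 hxΦ, h.2.2])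

theorem IsFacet.nonneg (h : IsFacet P Φ) {φ : (Fin N → ℝ) →ᵃ[ℝ] ℝ} (hφ : ∀ v ∈ Φ, φ v = 0)
    (hx : x ∈ P) (hφx : 0 < φ x) : ∀ q ∈ P, 0 ≤ φ q := by
  obtain ⟨-, -, ψ, hψ, hΦ⟩ := isFacet_iff_exists_affineMap.1 h
  have hψΦ : ∀ v ∈ Φ, ψ v = 0 := fun v hv => (hΦ ▸ hv : v ∈ {q ∈ P | ψ q = 0}).2
  have hψx : 0 < ψ x := (hψ x hx).lt_of_ne' fun h0 =>
    hφx.ne' (hφ x (hΦ ▸ ⟨hx, h0⟩))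
  intro q hq
  have hproportional : ψ x * φ q = φ x * ψ q := by
    refine AffineMap.eqOn_affineSpan (s := insert x Φ) (f := ψ x • φ) (g := φ x • ψ) ?_ ?_
    · rintro v (rfl | hv)
      · simp [mul_comm]
      · simp [hφ v hv, hψΦ v hv]
    · rw [h.affineSpan_insert hx (notMem_affineSpan_of_eq_zero hφ hφx.ne')]
      exact subset_affineSpan ℝ P hq
  exact nonneg_of_mul_nonneg_right (hproportional ▸ mul_nonneg hφx.le (hψ q hq)) hψx

/-- The affine functionals that support the polytope `convexHull ℝ s` at `x` without vanishing on
the whole of it. -/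
def supportingFunctionals (s : Set (Fin N → ℝ)) (x : Fin N → ℝ) : Set ((Fin N → ℝ) →ᵃ[ℝ] ℝ) :=
  {ψ | (∀ v ∈ s, 0 ≤ ψ v) ∧ ψ x = 0 ∧ ∃ v ∈ s, 0 < ψ v}

theorem supportingFunctionals_nonempty (hx : x ∈ convexHull ℝ s)
    (hx' : x ∉ intrinsicInterior ℝ (convexHull ℝ s)) : (supportingFunctionals s x).Nonempty := by
  obtain ⟨ψ, hψ, hψx, q, hq, hψq⟩ :=
    exists_affineMap_nonneg_of_notMem_intrinsicInterior (convex_convexHull ℝ s) hx hx'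
  refine ⟨ψ, fun v hv => hψ v (subset_convexHull ℝ s hv), hψx, ?_⟩
  by_contra! hle
  have := nonneg_on_convexHull (s := s) (φ := -ψ) (by simpa using hle) q hq
  exact hψq.not_ge (by simpa using this)

theorem exists_zeros_ssubset (hs : s.Finite) (hx : x ∈ convexHull ℝ s)
    {ψ : (Fin N → ℝ) →ᵃ[ℝ] ℝ} (hψ : ψ ∈ supportingFunctionals s x)
    (hfacet : ¬ IsFacet (convexHull ℝ s) {q ∈ convexHull ℝ s | ψ q = 0}) :
    ∃ ψ' ∈ supportingFunctionals s x, {v ∈ s | ψ v = 0} ⊂ {v ∈ s | ψ' v = 0} := by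
  obtain ⟨hψs, hψx, v₀, hv₀, hψv₀⟩ := hψ
  set Φ := {q ∈ convexHull ℝ s | ψ q = 0}
  have hxΦ : x ∈ Φ := ⟨hx, hψx⟩
  have hsΦ : ∀ v ∈ s, ψ v = 0 → v ∈ Φ := fun v hv h0 => ⟨subset_convexHull ℝ s hv, h0⟩
  have hv₀Φ : v₀ ∉ affineSpan ℝ Φ := notMem_affineSpan_of_eq_zero (fun v hv => hv.2) hψv₀.ne'
  obtain ⟨v₁, hv₁, hv₁Φ⟩ : ∃ v₁ ∈ s, v₁ ∉ affineSpan ℝ (insert v₀ Φ) := by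
    by_contra! hspan
    have hle : insert v₀ Φ ⊆ affineSpan ℝ s := by
      rw [← affineSpan_convexHull]
      exact (Set.insert_subset (subset_convexHull ℝ s hv₀) (Set.sep_subset _ _)).trans
        (subset_affineSpan ℝ _)
    have heq := le_antisymm (affineSpan_le.2 hle) (affineSpan_le.2 hspan)
    refine hfacet (isFacet_iff_exists_affineMap.2
      ⟨⟨x, hxΦ⟩, ?_, ψ, nonneg_on_convexHull hψs, rfl⟩)
    rw [← polyDim_insert ⟨x, hxΦ⟩ hv₀Φ, polyDim_convexHull, polyDim, heq, polyDim]
  obtain ⟨φ, hφ, hφv₁⟩ := exists_affineMap_neg_of_notMem_affineSpan hv₁Φ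
  have hφΦ : ∀ v ∈ Φ, φ v = 0 := fun v hv => hφ v (Set.mem_insert_of_mem _ hv)
  obtain ⟨t, hnonneg, w, hw, hφw, hw0⟩ :=
    exists_add_mul_nonneg_and_eq_zero hs hψs ⟨v₁, hv₁, hφv₁⟩
  refine ⟨ψ + t • φ, ⟨hnonneg, by simp [hψx, hφΦ x hxΦ], v₀, hv₀,
    by simpa [hφ v₀ (Set.mem_insert _ _)] using hψv₀⟩, ?_⟩
  have hsub : {v ∈ s | ψ v = 0} ⊆ {v ∈ s | (ψ + t • φ) v = 0} :=
    fun v hv => ⟨hv.1, by simp [hv.2, hφΦ v (hsΦ v hv.1 hv.2)]⟩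
  exact (Set.ssubset_iff_of_subset hsub).2 ⟨w, ⟨hw, hw0⟩, fun h => hφw.ne (hφΦ w (hsΦ w hw h.2))⟩

theorem exists_isFacet_of_notMem_intrinsicInterior (hs : s.Finite) (hx : x ∈ convexHull ℝ s)
    (hx' : x ∉ intrinsicInterior ℝ (convexHull ℝ s)) :
    ∃ Φ, IsFacet (convexHull ℝ s) Φ ∧ x ∈ Φ := by
  obtain ⟨ψ, hψ, hmax⟩ := Set.Finite.exists_maximalFor' (fun ψ => {v ∈ s | ψ v = 0})
    (supportingFunctionals s x)
    (hs.finite_subsets.subset (Set.image_subset_iff.2 fun ψ _ => Set.sep_subset _ _))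
    (supportingFunctionals_nonempty hx hx')
  refine ⟨{q ∈ convexHull ℝ s | ψ q = 0}, ?_, hx, hψ.2.1⟩
  by_contra hfacet
  obtain ⟨ψ', hψ', hlt⟩ := exists_zeros_ssubset hs hx hψ hfacet
  exact hlt.not_subset (hmax hψ' hlt.subset)

end Facet

section Lattice

variable {N M : ℕ} {P F G : Set (Fin N → ℝ)} {x y : Fin N → ℝ}

theorem IsLatticePt.add (hx : IsLatticePt x) (hy : IsLatticePt y) : IsLatticePt (x + y) :=
  fun i => by
    obtain ⟨a, ha⟩ := hx i
    obtain ⟨b, hb⟩ := hy i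
    exact ⟨a + b, by simp [ha, hb]⟩

theorem IsLatticePt.sub (hx : IsLatticePt x) (hy : IsLatticePt y) : IsLatticePt (x - y) :=
  fun i => by
    obtain ⟨a, ha⟩ := hx i
    obtain ⟨b, hb⟩ := hy i
    exact ⟨a - b, by simp [ha, hb]⟩

theorem IsLatticePt.natCast_smul (hx : IsLatticePt x) (n : ℕ) : IsLatticePt ((n : ℝ) • x) :=
  fun i => by
    obtain ⟨a, ha⟩ := hx i
    exact ⟨n * a, by simp [ha]⟩

theorem IsLatticePt.sum {ι : Type*} {s : Finset ι} {p : ι → Fin N → ℝ}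
    (hp : ∀ i ∈ s, IsLatticePt (p i)) : IsLatticePt (∑ i ∈ s, p i) :=
  Finset.sum_induction p IsLatticePt (fun _ _ => IsLatticePt.add) (fun _ => ⟨0, by simp⟩) hp

theorem IsLatticePt.append {z : Fin M → ℝ} (hx : IsLatticePt x) (hz : IsLatticePt z) :
    IsLatticePt (Fin.append x z) :=
  Fin.addCases (fun i => by simpa using hx i) (fun i => by simpa using hz i)

theorem isLatticePolytope_convexHull {s : Set (Fin N → ℝ)} (hs : s.Finite) (hne : s.Nonempty)
    (hl : ∀ v ∈ s, IsLatticePt v) : IsLatticePolytope (convexHull ℝ s) :=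
  ⟨hs.toFinset, by simpa using hne, by simpa using hl, by simp⟩

theorem IsLatticePolytope.exists_range (hP : IsLatticePolytope P) :
    ∃ (ι : Type) (_ : Fintype ι) (_ : Nonempty ι) (p : ι → Fin N → ℝ),
      (∀ i, IsLatticePt (p i)) ∧ P = convexHull ℝ (Set.range p) := by
  obtain ⟨V, hV, hl, rfl⟩ := hP
  exact ⟨V, inferInstance, hV.to_subtype, Subtype.val, fun v => hl v v.2, by simp⟩

theorem IsLatticePolytope.convex (hP : IsLatticePolytope P) : Convex ℝ P := by
  obtain ⟨V, -, -, rfl⟩ := hP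
  exact convex_convexHull ℝ _

theorem IsLatticePolytope.exists_isLatticePt_mem (hP : IsLatticePolytope P) :
    ∃ v ∈ P, IsLatticePt v := by
  obtain ⟨V, ⟨v, hv⟩, hl, rfl⟩ := hP
  exact ⟨v, subset_convexHull ℝ _ hv, hl v hv⟩

theorem isLatticePolytope_singleton_iff : IsLatticePolytope {x} ↔ IsLatticePt x := by
  refine ⟨fun h => ?_, fun hx => ?_⟩
  · obtain ⟨_, rfl, hx⟩ := h.exists_isLatticePt_mem
    exact hx
  · simpa using isLatticePolytope_convexHull (Set.finite_singleton x) (Set.singleton_nonempty x)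
      (by simpa using hx)

theorem IsLatticePolytope.nonempty (hP : IsLatticePolytope P) : P.Nonempty :=
  let ⟨v, hv, _⟩ := hP.exists_isLatticePt_mem
  ⟨v, hv⟩

theorem IsLatticePolytope.convexHull_union (hF : IsLatticePolytope F) (hG : IsLatticePolytope G) :
    IsLatticePolytope (convexHull ℝ (F ∪ G)) := by
  obtain ⟨V, hV, hVl, rfl⟩ := hF
  obtain ⟨W, -, hWl, rfl⟩ := hG
  rw [convexHull_convexHull_union_left, convexHull_convexHull_union_right]
  exact isLatticePolytope_convexHull (V.finite_toSet.union W.finite_toSet)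
    (Set.Nonempty.inl hV) (by rintro v (hv | hv); exacts [hVl v hv, hWl v hv])

theorem IsLatticePolytope.image {f : (Fin N → ℝ) →ᵃ[ℝ] (Fin M → ℝ)} (hP : IsLatticePolytope P)
    (hf : ∀ v ∈ P, IsLatticePt v → IsLatticePt (f v)) : IsLatticePolytope (f '' P) := by
  obtain ⟨V, hV, hl, rfl⟩ := hP
  rw [AffineMap.image_convexHull]
  refine isLatticePolytope_convexHull (V.finite_toSet.image f) (Set.Nonempty.image f hV) ?_
  rintro _ ⟨v, hv, rfl⟩
  exact hf v (subset_convexHull ℝ _ hv) (hl v hv)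

end Lattice

section Codegree

variable {N : ℕ} {P F G : Set (Fin N → ℝ)} {x y p : Fin N → ℝ} {r : ℕ}

theorem not_isHollow_iff : ¬ IsHollow P ↔ ∃ x ∈ intrinsicInterior ℝ P, IsLatticePt x := by
  simp [IsHollow]

theorem IsLatticePolytope.polyCodeg_spec (hP : IsLatticePolytope P) :
    0 < polyCodeg P ∧ ¬ IsHollow ((polyCodeg P : ℝ) • P) := by
  obtain ⟨ι, _, _, p, hp, rfl⟩ := hP.exists_range
  refine Nat.sInf_mem (s := {r : ℕ | 0 < r ∧ ¬ IsHollow ((r : ℝ) • convexHull ℝ (Set.range p))})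
    ⟨Fintype.card ι, Fintype.card_pos, not_isHollow_iff.2 ?_⟩
  exact ⟨_, sum_mem_intrinsicInterior_card_smul_convexHull_range, IsLatticePt.sum fun i _ => hp i⟩

theorem IsLatticePolytope.polyCodeg_pos (hP : IsLatticePolytope P) : 0 < polyCodeg P :=
  hP.polyCodeg_spec.1

theorem IsLatticePolytope.exists_isLatticePt_mem_intrinsicInterior (hP : IsLatticePolytope P) :
    ∃ x ∈ intrinsicInterior ℝ ((polyCodeg P : ℝ) • P), IsLatticePt x :=
  not_isHollow_iff.1 hP.polyCodeg_spec.2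

theorem polyCodeg_le (hr : 0 < r) (hx : x ∈ intrinsicInterior ℝ ((r : ℝ) • P))
    (hxl : IsLatticePt x) : polyCodeg P ≤ r :=
  Nat.sInf_le ⟨hr, not_isHollow_iff.2 ⟨x, hx, hxl⟩⟩

theorem IsLatticePolytope.add_smul_mem_intrinsicInterior (hP : IsLatticePolytope P) {a : ℝ}
    (ha : 0 < a) (hx : x ∈ intrinsicInterior ℝ (a • P)) (hp : p ∈ P) (k : ℕ) :
    x + (k : ℝ) • p ∈ intrinsicInterior ℝ ((a + k) • P) := by
  obtain ⟨ι, _, _, q, -, rfl⟩ := hP.exists_range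
  obtain rfl | hk := k.eq_zero_or_pos
  · simpa using hx
  · exact add_mem_intrinsicInterior_smul_convexHull_range ha (by exact_mod_cast hk) hx
      (Set.smul_mem_smul_set hp)

theorem IsLatticePolytope.add_mem_intrinsicInterior_convexHull_union (hF : IsLatticePolytope F)
    (hG : IsLatticePolytope G) {a b : ℝ} (ha : 0 < a) (hb : 0 < b)
    (hx : x ∈ intrinsicInterior ℝ (a • F)) (hy : y ∈ intrinsicInterior ℝ (b • G)) :
    x + y ∈ intrinsicInterior ℝ ((a + b) • convexHull ℝ (F ∪ G)) := by
  obtain ⟨ι, _, _, p, -, rfl⟩ := hF.exists_range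
  obtain ⟨κ, _, _, q, -, rfl⟩ := hG.exists_range
  rw [convexHull_convexHull_union_left, convexHull_convexHull_union_right]
  exact add_mem_intrinsicInterior_smul_convexHull_union ha hb hx hy

end Codegree

section GorensteinCenter

variable {N : ℕ} {P Φ : Set (Fin N → ℝ)} {x y : Fin N → ℝ} {r : ℕ} {c : ℝ}

/-- A linear functional is integral on a subspace if it takes integer values on the lattice points
of that subspace. This is the linear counterpart of `IsIntegralOn`. -/
def IsIntegralOnSubmodule (W : Submodule ℝ (Fin N → ℝ)) (L : (Fin N → ℝ) →ₗ[ℝ] ℝ) : Prop :=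
  ∀ v ∈ W, IsLatticePt v → ∃ z : ℤ, L v = z

theorem IsIntegralOnSubmodule.mono {W W' : Submodule ℝ (Fin N → ℝ)} {L : (Fin N → ℝ) →ₗ[ℝ] ℝ}
    (h : IsIntegralOnSubmodule W' L) (hW : W ≤ W') : IsIntegralOnSubmodule W L :=
  fun v hv => h v (hW hv)

theorem IsIntegralOn.linear {u : (Fin N → ℝ) →ᵃ[ℝ] ℝ} (hu : IsIntegralOn P u) (hx : x ∈ P)
    (hxl : IsLatticePt x) : IsIntegralOnSubmodule (vectorSpan ℝ P) u.linear := fun v hv hvl => by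
  have hxP := subset_affineSpan ℝ P hx
  rw [← direction_affineSpan] at hv
  obtain ⟨a, ha⟩ := hu _ hxP hxl
  obtain ⟨b, hb⟩ := hu (v +ᵥ x) (AffineSubspace.vadd_mem_of_mem_direction hv hxP) (hvl.add hxl)
  refine ⟨b - a, ?_⟩
  rw [u.map_vadd, vadd_eq_add, ha] at hb
  push_cast
  linarith

theorem isIntegralOn_toAffineMap_sub_const {L : (Fin N → ℝ) →ₗ[ℝ] ℝ}
    (hL : IsIntegralOnSubmodule (vectorSpan ℝ P) L) (hx : x ∈ affineSpan ℝ P)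
    (hxl : IsLatticePt x) : IsIntegralOn P (L.toAffineMap - AffineMap.const ℝ _ (L x)) :=
  fun y hy hyl => by
    obtain ⟨z, hz⟩ := hL (y - x)
      (direction_affineSpan ℝ P ▸ AffineSubspace.vsub_mem_direction hy hx) (hyl.sub hxl)
    exact ⟨z, by simpa using hz⟩

theorem vectorSpan_smul_set (hc : c ≠ 0) : vectorSpan ℝ (c • P) = vectorSpan ℝ P := by
  rw [← direction_affineSpan, ← AffineSubspace.smul_span, AffineSubspace.direction_smul hc,
    direction_affineSpan]

theorem IsFacet.smul (h : IsFacet P Φ) (hc : c ≠ 0) : IsFacet (c • P) (c • Φ) := by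
  obtain ⟨hne, hdim, ψ, hψ, hΦ⟩ := isFacet_iff_exists_affineMap.1 h
  refine isFacet_iff_exists_affineMap.2 ⟨hne.smul_set,
    by rw [polyDim_smul hc, polyDim_smul hc, hdim],
    ψ.comp (c⁻¹ • LinearMap.id : (Fin N → ℝ) →ₗ[ℝ] Fin N → ℝ).toAffineMap,
    fun q hq => by simpa using hψ (c⁻¹ • q) ((Set.mem_smul_set_iff_inv_smul_mem₀ hc _ _).1 hq),
    Set.ext fun q => ?_⟩
  rw [Set.mem_smul_set_iff_inv_smul_mem₀ hc, hΦ]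
  simp [Set.mem_smul_set_iff_inv_smul_mem₀ hc]

/-- The condition of reflexivity of `r • P` at the lattice point `x`, expressed on the facets of
`P` by linear functionals: the affine functional witnessing that the facet `r • Φ` has lattice
distance one from `x` has linear part `-L`. -/
structure IsGorensteinCenter (P : Set (Fin N → ℝ)) (r : ℕ) (x : Fin N → ℝ) : Prop where
  mem_intrinsicInterior : x ∈ intrinsicInterior ℝ ((r : ℝ) • P)
  isLatticePt : IsLatticePt x
  exists_functional : ∀ Φ, IsFacet P Φ → ∃ L : (Fin N → ℝ) →ₗ[ℝ] ℝ,
    IsIntegralOnSubmodule (vectorSpan ℝ P) L ∧ ∀ q ∈ Φ, L x = r * L q + 1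

theorem isReflexivePolytope_smul_iff (hr : 0 < r) :
    IsReflexivePolytope ((r : ℝ) • P) ↔ ∃ x, IsGorensteinCenter P r x := by
  have hr₀ : (r : ℝ) ≠ 0 := by positivity
  constructor
  · rintro ⟨x, hx, hxl, hfacet⟩
    refine ⟨x, hx, hxl, fun Φ hΦ => ?_⟩
    obtain ⟨u, hu, huΦ⟩ := hfacet _ (hΦ.smul hr₀)
    have hlin := hu.linear (intrinsicInterior_subset hx) hxl
    rw [vectorSpan_smul_set hr₀] at hlin
    refine ⟨-u.linear, fun v hv hvl => ?_, fun q hq => ?_⟩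
    · obtain ⟨z, hz⟩ := hlin v hv hvl
      exact ⟨-z, by simp [hz]⟩
    · have h := u.linearMap_vsub ((r : ℝ) • q) x
      rw [huΦ _ (Set.smul_mem_smul_set hq)] at h
      simp only [vsub_eq_sub, map_sub, map_smul, smul_eq_mul, add_sub_cancel_left] at h
      simp only [LinearMap.neg_apply]
      linarith
  · rintro ⟨x, hx, hxl, hfacet⟩
    refine ⟨x, hx, hxl, fun Ψ hΨ => ?_⟩
    obtain ⟨L, hL, hLΦ⟩ := hfacet ((r : ℝ)⁻¹ • Ψ)
      (by simpa [inv_smul_smul₀ hr₀] using hΨ.smul (inv_ne_zero hr₀))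
    rw [← vectorSpan_smul_set hr₀] at hL
    have hint := isIntegralOn_toAffineMap_sub_const hL
      (subset_affineSpan ℝ _ (intrinsicInterior_subset hx)) hxl
    refine ⟨-(L.toAffineMap - AffineMap.const ℝ _ (L x)), fun y hy hyl => ?_, fun f hf => ?_⟩
    · obtain ⟨z, hz⟩ := hint y hy hyl
      exact ⟨-z, by simp only [AffineMap.coe_neg, Pi.neg_apply, hz, Int.cast_neg]⟩
    · have h := hLΦ _ (Set.smul_mem_smul_set hf)
      rw [map_smul, smul_eq_mul, mul_inv_cancel_left₀ hr₀] at h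
      simp [h]

theorem isGorenstein_iff : IsGorenstein P ↔ ∃ r, 0 < r ∧ ∃ x, IsGorensteinCenter P r x :=
  exists_congr fun _ => and_congr_right isReflexivePolytope_smul_iff

theorem IsLatticePolytope.exists_isFacet_of_notMem_intrinsicInterior (hP : IsLatticePolytope P)
    (hc : c ≠ 0) (hx : x ∈ c • P) (hx' : x ∉ intrinsicInterior ℝ (c • P)) :
    ∃ Φ, IsFacet P Φ ∧ x ∈ c • Φ := by
  obtain ⟨V, -, -, rfl⟩ := hP
  rw [← convexHull_smul] at hx hx'
  obtain ⟨Ψ, hΨ, hxΨ⟩ :=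
    _root_.exists_isFacet_of_notMem_intrinsicInterior (V.finite_toSet.smul_set) hx hx'
  rw [convexHull_smul] at hΨ
  exact ⟨c⁻¹ • Ψ, by simpa [inv_smul_smul₀ hc] using hΨ.smul (inv_ne_zero hc),
    by rwa [smul_inv_smul₀ hc]⟩

theorem IsLatticePolytope.isCompact (hP : IsLatticePolytope P) : IsCompact P := by
  obtain ⟨V, -, -, rfl⟩ := hP
  exact V.finite_toSet.isCompact_convexHull ℝ

theorem IsFacet.le_of_isLatticePt (hΦ : IsFacet P Φ) {L : (Fin N → ℝ) →ₗ[ℝ] ℝ}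
    (hL : IsIntegralOnSubmodule (vectorSpan ℝ P) L) (hLΦ : ∀ q ∈ Φ, L x = r * L q + 1)
    (hr : 0 < r) (hx : x ∈ (r : ℝ) • P) (hxl : IsLatticePt x)
    (hy : y ∈ intrinsicInterior ℝ ((r : ℝ) • P)) (hyl : IsLatticePt y) : L x ≤ L y := by
  have hr₀ : (r : ℝ) ≠ 0 := by positivity
  let φ : (Fin N → ℝ) →ᵃ[ℝ] ℝ := L.toAffineMap - AffineMap.const ℝ _ (L x - 1)
  have hφΦ : ∀ v ∈ (r : ℝ) • Φ, φ v = 0 := by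
    rintro _ ⟨v, hv, rfl⟩
    simp [φ, hLΦ v hv]
  have hφx : 0 < φ x := by simp [φ]
  have hφy : 0 < φ y :=
    pos_of_mem_intrinsicInterior ((hΦ.smul hr₀).nonneg hφΦ hx hφx) hx hφx hy
  obtain ⟨k, hk⟩ := hL (x - y) (by
    rw [← vectorSpan_smul_set hr₀]
    exact vsub_mem_vectorSpan ℝ hx (intrinsicInterior_subset hy)) (hxl.sub hyl)
  rw [map_sub] at hk
  have hk1 : (k : ℝ) < 1 := by
    rw [← hk]
    simp only [φ, AffineMap.coe_sub, Pi.sub_apply, LinearMap.coe_toAffineMap,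
      AffineMap.const_apply] at hφy
    linarith
  have hk0 : (k : ℝ) ≤ 0 := by exact_mod_cast Int.lt_add_one_iff.1 (by exact_mod_cast hk1)
  linarith

theorem IsGorensteinCenter.eq_of_mem_intrinsicInterior (h : IsGorensteinCenter P r x)
    (hP : IsLatticePolytope P) (hr : 0 < r) (hy : y ∈ intrinsicInterior ℝ ((r : ℝ) • P))
    (hyl : IsLatticePt y) : y = x := by
  by_contra! hyx
  have hxP := intrinsicInterior_subset h.mem_intrinsicInterior
  obtain ⟨t, ht, hz, hz'⟩ := exists_add_smul_sub_mem_diff_intrinsicInterior (hP.isCompact.smul _)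
    hxP (intrinsicInterior_subset hy) hyx.symm
  obtain ⟨Φ, hΦ, w, hw, hwz⟩ :=
    hP.exists_isFacet_of_notMem_intrinsicInterior (by positivity) hz hz'
  obtain ⟨L, hL, hLΦ⟩ := h.exists_functional Φ hΦ
  have hle : L x ≤ L y := hΦ.le_of_isLatticePt hL hLΦ hr hxP h.isLatticePt hy hyl
  have hexit : t * (L x - L y) = 1 := by
    have := congrArg L hwz
    simp only [map_smul, map_add, map_sub, smul_eq_mul] at this
    linarith [hLΦ w hw]
  nlinarith

end GorensteinCenter

section LatticeIso

variable {N M : ℕ} {P : Set (Fin N → ℝ)} {Q : Set (Fin M → ℝ)}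

theorem map_mem_intrinsicInterior_image {f : (Fin N → ℝ) →ᵃ[ℝ] (Fin M → ℝ)} (hP : Convex ℝ P)
    {x : Fin N → ℝ} (hx : x ∈ intrinsicInterior ℝ P) : f x ∈ intrinsicInterior ℝ (f '' P) := by
  rw [mem_intrinsicInterior_iff_forall_exists (hP.affine_image f)]
  refine ⟨Set.mem_image_of_mem f (intrinsicInterior_subset hx), ?_⟩
  rintro _ ⟨y, hy, rfl⟩
  obtain ⟨ε, hε, hmem⟩ := exists_add_smul_sub_mem hx hy
  refine ⟨ε, hε, x + ε • (x - y), hmem, ?_⟩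
  rw [add_comm, ← vadd_eq_add, f.map_vadd, map_smul, ← vsub_eq_sub, f.linearMap_vsub]
  simp [add_comm]

/-- The affine map `r • P → r • Q` induced by an affine map `P → Q`. -/
noncomputable def affineDilation (f : (Fin N → ℝ) →ᵃ[ℝ] (Fin M → ℝ)) (r : ℝ) :
    (Fin N → ℝ) →ᵃ[ℝ] (Fin M → ℝ) :=
  f.linear.toAffineMap + AffineMap.const ℝ _ (r • f 0)

theorem affineDilation_smul (f : (Fin N → ℝ) →ᵃ[ℝ] (Fin M → ℝ)) (r : ℝ) (x : Fin N → ℝ) :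
    affineDilation f r (r • x) = r • f x := by
  have h : f x = f.linear x + f 0 := congrFun f.decomp x
  simp [affineDilation, h]

theorem affineDilation_image_smul (f : (Fin N → ℝ) →ᵃ[ℝ] (Fin M → ℝ)) (r : ℝ) :
    affineDilation f r '' (r • P) = r • f '' P := by
  rw [← Set.image_smul, ← Set.image_smul, Set.image_image, Set.image_image]
  simp only [affineDilation_smul]

theorem isLatticePt_affineDilation {f : (Fin N → ℝ) →ᵃ[ℝ] (Fin M → ℝ)}
    (hf : ∀ x ∈ affineSpan ℝ P, IsLatticePt x → IsLatticePt (f x)) {p x : Fin N → ℝ} {r : ℕ}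
    (hp : p ∈ P) (hpl : IsLatticePt p) (hx : x ∈ (r : ℝ) • P) (hxl : IsLatticePt x) :
    IsLatticePt (affineDilation f r x) := by
  obtain ⟨q, hq, rfl⟩ := Set.mem_smul_set.1 hx
  have hpP := subset_affineSpan ℝ P hp
  have hmem : (r : ℝ) • (q - p) +ᵥ p ∈ affineSpan ℝ P :=
    AffineSubspace.vadd_mem_of_mem_direction (Submodule.smul_mem _ _
      (AffineSubspace.vsub_mem_direction (subset_affineSpan ℝ P hq) hpP)) hpP
  have hl : IsLatticePt ((r : ℝ) • (q - p) +ᵥ p) := by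
    rw [smul_sub]
    exact (hxl.sub (hpl.natCast_smul r)).add hpl
  have heq : affineDilation f r ((r : ℝ) • q)
      = f ((r : ℝ) • (q - p) +ᵥ p) - f p + (r : ℝ) • f p := by
    rw [affineDilation_smul, f.map_vadd, map_smul, ← vsub_eq_sub q, f.linearMap_vsub, vsub_eq_sub,
      smul_sub, vadd_eq_add]
    abel
  rw [heq]
  exact ((hf _ hmem hl).sub (hf p hpP hpl)).add ((hf p hpP hpl).natCast_smul r)

theorem LatticeIso.symm (h : LatticeIso P Q) : LatticeIso Q P :=
  let ⟨f, g, hf, hg, hgf, hfg, hfl, hgl⟩ := h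
  ⟨g, f, hg, hf, hfg, hgf, hgl, hfl⟩

theorem LatticeIso.isLatticePolytope (h : LatticeIso P Q) (hP : IsLatticePolytope P) :
    IsLatticePolytope Q := by
  obtain ⟨f, -, rfl, -, -, -, hf, -⟩ := h
  exact hP.image fun v hv => hf v (subset_affineSpan ℝ P hv)

theorem LatticeIso.polyDim_le (h : LatticeIso P Q) : polyDim Q ≤ polyDim P := by
  obtain ⟨f, -, rfl, -⟩ := h
  rw [polyDim, ← AffineSubspace.map_span, AffineSubspace.map_direction]
  exact Submodule.finrank_map_le _ _

theorem LatticeIso.polyDim_eq (h : LatticeIso P Q) : polyDim P = polyDim Q :=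
  h.symm.polyDim_le.antisymm h.polyDim_le

theorem LatticeIso.polyCodeg_le (h : LatticeIso P Q) (hP : IsLatticePolytope P) :
    polyCodeg Q ≤ polyCodeg P := by
  obtain ⟨f, -, rfl, -, -, -, hf, -⟩ := h
  obtain ⟨x, hx, hxl⟩ := hP.exists_isLatticePt_mem_intrinsicInterior
  obtain ⟨p, hp, hpl⟩ := hP.exists_isLatticePt_mem
  refine _root_.polyCodeg_le hP.polyCodeg_pos (x := affineDilation f (polyCodeg P) x) ?_
    (isLatticePt_affineDilation hf hp hpl (intrinsicInterior_subset hx) hxl)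
  rw [← affineDilation_image_smul]
  exact map_mem_intrinsicInterior_image (hP.convex.smul _) hx

theorem LatticeIso.polyCodeg_eq (h : LatticeIso P Q) (hP : IsLatticePolytope P) :
    polyCodeg P = polyCodeg Q :=
  (h.symm.polyCodeg_le (h.isLatticePolytope hP)).antisymm (h.polyCodeg_le hP)

theorem latticeIso_image {f : (Fin N → ℝ) →ᵃ[ℝ] (Fin M → ℝ)} {g : (Fin M → ℝ) →ᵃ[ℝ] (Fin N → ℝ)}
    (hgf : ∀ x ∈ P, g (f x) = x)
    (hf : ∀ x ∈ affineSpan ℝ P, IsLatticePt x → IsLatticePt (f x))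
    (hg : ∀ y ∈ affineSpan ℝ (f '' P), IsLatticePt y → IsLatticePt (g y)) :
    LatticeIso P (f '' P) := by
  have hgf' : ∀ x ∈ affineSpan ℝ P, g (f x) = x :=
    AffineMap.eqOn_affineSpan (f := g.comp f) (g := AffineMap.id ℝ _) hgf
  refine ⟨f, g, rfl, ?_, hgf', ?_, hf, hg⟩
  · rw [Set.image_image, Set.image_congr hgf, Set.image_id']
  · rw [← AffineSubspace.map_span]
    rintro _ ⟨x, hx, rfl⟩
    rw [hgf' x hx]

end LatticeIso

section CayleyDecomposition

variable {N M : ℕ} {P F G : Set (Fin N → ℝ)} {α : (Fin N → ℝ) →ᵃ[ℝ] ℝ}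

/-- A decomposition of a lattice polytope as the Cayley polytope of `F` and `G`, inside its own
ambient space: `α` is an integral functional of value `1` on `F` and `0` on `G`. -/
structure IsCayleyDecomposition (P F G : Set (Fin N → ℝ)) (α : (Fin N → ℝ) →ᵃ[ℝ] ℝ) : Prop where
  isLatticePolytope_left : IsLatticePolytope F
  isLatticePolytope_right : IsLatticePolytope G
  eq_convexHull : P = convexHull ℝ (F ∪ G)
  isIntegralOn : IsIntegralOn P α
  eq_one : ∀ v ∈ F, α v = 1
  eq_zero : ∀ v ∈ G, α v = 0

namespace IsCayleyDecomposition

theorem left_subset (h : IsCayleyDecomposition P F G α) : F ⊆ P :=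
  h.eq_convexHull ▸ Set.subset_union_left.trans (subset_convexHull ℝ _)

theorem symm (h : IsCayleyDecomposition P F G α) :
    IsCayleyDecomposition P G F (AffineMap.const ℝ _ 1 - α) where
  isLatticePolytope_left := h.isLatticePolytope_right
  isLatticePolytope_right := h.isLatticePolytope_left
  eq_convexHull := by rw [h.eq_convexHull, Set.union_comm]
  isIntegralOn y hy hyl := by
    obtain ⟨z, hz⟩ := h.isIntegralOn y hy hyl
    exact ⟨1 - z, by simp [hz]⟩
  eq_one v hv := by simp [h.eq_zero v hv]
  eq_zero v hv := by simp [h.eq_one v hv]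

theorem right_subset (h : IsCayleyDecomposition P F G α) : G ⊆ P := h.symm.left_subset

theorem isLatticePolytope (h : IsCayleyDecomposition P F G α) : IsLatticePolytope P :=
  h.eq_convexHull ▸ h.isLatticePolytope_left.convexHull_union h.isLatticePolytope_right

theorem nonneg (h : IsCayleyDecomposition P F G α) : ∀ v ∈ P, 0 ≤ α v := by
  rw [h.eq_convexHull]
  refine nonneg_on_convexHull ?_
  rintro v (hv | hv)
  exacts [h.eq_one v hv ▸ zero_le_one, (h.eq_zero v hv).ge]

theorem exists_of_latticeIso {Q : Set (Fin M → ℝ)} (h : IsCayleyDecomposition P F G α)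
    (hPQ : LatticeIso P Q) : ∃ F' G' β, IsCayleyDecomposition Q F' G' β ∧
      LatticeIso F F' ∧ LatticeIso G G' := by
  obtain ⟨f, g, rfl, -, hgf, -, hf, hg⟩ := hPQ
  have hgf' : ∀ v ∈ P, g (f v) = v := fun v hv => hgf v (subset_affineSpan ℝ P hv)
  have hiso : ∀ A ⊆ P, LatticeIso A (f '' A) := fun A hA =>
    latticeIso_image (fun v hv => hgf' v (hA hv))
      (fun x hx => hf x (affineSpan_mono ℝ hA hx))
      (fun y hy => hg y (affineSpan_mono ℝ (Set.image_mono hA) hy))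
  have hF := hiso F h.left_subset
  have hG := hiso G h.right_subset
  refine ⟨f '' F, f '' G, α.comp g,
    ⟨hF.isLatticePolytope h.isLatticePolytope_left, hG.isLatticePolytope h.isLatticePolytope_right,
      ?_, ?_, ?_, ?_⟩, hF, hG⟩
  · rw [← Set.image_union, ← AffineMap.image_convexHull, ← h.eq_convexHull]
  · rw [IsIntegralOn, ← AffineSubspace.map_span]
    rintro _ ⟨x, hx, rfl⟩ hl
    have hxl := hg (f x) (by rw [← AffineSubspace.map_span]; exact ⟨x, hx, rfl⟩) hl
    rw [hgf x hx] at hxl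
    simpa [hgf x hx] using h.isIntegralOn x hx hxl
  · rintro _ ⟨v, hv, rfl⟩
    simp [hgf' v (h.left_subset hv), h.eq_one v hv]
  · rintro _ ⟨v, hv, rfl⟩
    simp [hgf' v (h.right_subset hv), h.eq_zero v hv]

end IsCayleyDecomposition

end CayleyDecomposition

section Models

variable {N m n : ℕ}

/-- The affine map into `ℝ^m × ℝ^n` with components `f` and `h`. -/
def appendMap (f : (Fin N → ℝ) →ᵃ[ℝ] (Fin m → ℝ)) (h : (Fin N → ℝ) →ᵃ[ℝ] (Fin n → ℝ)) :
    (Fin N → ℝ) →ᵃ[ℝ] (Fin (m + n) → ℝ) :=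
  AffineMap.pi (Fin.addCases (fun i => (AffineMap.proj i).comp f)
    (fun i => (AffineMap.proj i).comp h))

theorem appendMap_apply (f : (Fin N → ℝ) →ᵃ[ℝ] (Fin m → ℝ)) (h : (Fin N → ℝ) →ᵃ[ℝ] (Fin n → ℝ))
    (x : Fin N → ℝ) : appendMap f h x = Fin.append (f x) (h x) := by
  ext i
  refine Fin.addCases (fun i => ?_) (fun i => ?_) i <;> simp [appendMap]

theorem funLeft_castAdd_append (x : Fin m → ℝ) (c : Fin n → ℝ) :
    LinearMap.funLeft ℝ ℝ (Fin.castAdd n) (Fin.append x c) = x := by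
  ext i
  simp [LinearMap.funLeft_apply]

theorem isLatticePt_one_zero : IsLatticePt ![(1 : ℝ), 0] :=
  Fin.forall_fin_two.2 ⟨⟨1, by simp⟩, ⟨0, by simp⟩⟩

theorem isLatticePt_zero_one : IsLatticePt ![(0 : ℝ), 1] :=
  Fin.forall_fin_two.2 ⟨⟨0, by simp⟩, ⟨1, by simp⟩⟩

theorem latticeIso_append {F : Set (Fin m → ℝ)} {c : Fin n → ℝ} (hc : IsLatticePt c) :
    LatticeIso F ((fun x => Fin.append x c) '' F) := by
  have happend : (fun x : Fin m → ℝ => Fin.append x c) =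
      appendMap (AffineMap.id ℝ _) (AffineMap.const ℝ _ c) :=
    funext fun x => (appendMap_apply (AffineMap.id ℝ _) (AffineMap.const ℝ _ c) x).symm
  rw [happend]
  refine latticeIso_image (g := (LinearMap.funLeft ℝ ℝ (Fin.castAdd n)).toAffineMap)
    (fun x _ => ?_) (fun x _ hx => ?_) (fun y _ hy i => hy _)
  · rw [appendMap_apply]
    exact funLeft_castAdd_append x c
  · rw [appendMap_apply]
    exact hx.append hc

theorem isCayleyDecomposition_cayleyTwo {F G : Set (Fin n → ℝ)} (hF : IsLatticePolytope F)
    (hG : IsLatticePolytope G) :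
    IsCayleyDecomposition (cayleyTwo F G) ((fun x => Fin.append x ![(1 : ℝ), 0]) '' F)
      ((fun x => Fin.append x ![(0 : ℝ), 1]) '' G) (AffineMap.proj (Fin.natAdd n 0)) where
  isLatticePolytope_left := (latticeIso_append isLatticePt_one_zero).isLatticePolytope hF
  isLatticePolytope_right := (latticeIso_append isLatticePt_zero_one).isLatticePolytope hG
  eq_convexHull := rfl
  isIntegralOn _ _ hy := hy _
  eq_one := by
    rintro _ ⟨x, -, rfl⟩
    simp
  eq_zero := by
    rintro _ ⟨x, -, rfl⟩
    simp

theorem isCayleyDecomposition_pyramidOver {Q : Set (Fin m → ℝ)} (hQ : IsLatticePolytope Q) :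
    IsCayleyDecomposition (pyramidOver Q) {Fin.snoc (0 : Fin m → ℝ) (1 : ℝ)}
      ((fun x => Fin.snoc x (0 : ℝ)) '' Q) (AffineMap.proj (Fin.last m)) where
  isLatticePolytope_left := isLatticePolytope_singleton_iff.2
    (Fin.lastCases ⟨1, by simp⟩ fun i => ⟨0, by simp⟩)
  isLatticePolytope_right := by
    simpa only [Fin.append_right_eq_snoc] using
      (latticeIso_append (c := fun _ : Fin 1 => (0 : ℝ)) fun _ => ⟨0, by simp⟩).isLatticePolytope hQ
  eq_convexHull := by rw [pyramidOver, Set.union_comm]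
  isIntegralOn _ _ hy := hy _
  eq_one := by simp
  eq_zero := by
    rintro _ ⟨x, -, rfl⟩
    simp

theorem IsCayleyDecomposition.latticeIso_pyramidOver {P B : Set (Fin N → ℝ)} {v : Fin N → ℝ}
    {α : (Fin N → ℝ) →ᵃ[ℝ] ℝ} (h : IsCayleyDecomposition P {v} B α) :
    LatticeIso P (pyramidOver (-v +ᵥ B)) := by
  have hv := isLatticePolytope_singleton_iff.1 h.isLatticePolytope_left
  let f := appendMap (AffineEquiv.constVAdd ℝ (Fin N → ℝ) (-v)).toAffineMap
    (AffineMap.pi fun _ : Fin 1 => α)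
  have hf : ∀ x, f x = Fin.snoc (-v +ᵥ x) (α x) := fun x => by
    rw [appendMap_apply, Fin.append_right_eq_snoc]
    rfl
  have himage : f '' P = pyramidOver (-v +ᵥ B) := by
    rw [h.eq_convexHull, AffineMap.image_convexHull, Set.image_union, Set.image_singleton, hf,
      vadd_eq_add, neg_add_cancel, h.eq_one v rfl, Set.union_comm, pyramidOver, ← Set.image_vadd,
      Set.image_image, Set.image_congr fun x hx => by rw [hf, h.eq_zero x hx]]
  rw [← himage]
  refine latticeIso_image (g := (LinearMap.funLeft ℝ ℝ Fin.castSucc).toAffineMap +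
    AffineMap.const ℝ _ v) (fun x _ => ?_) (fun x hx hxl => ?_) (fun y _ hy => ?_)
  · rw [hf]
    ext i
    simp [LinearMap.funLeft_apply]
  · rw [hf]
    exact Fin.lastCases (by simpa using h.isIntegralOn x hx hxl)
      (fun i => by simpa [neg_add_eq_sub] using hxl.sub hv i)
  · exact IsLatticePt.add (fun i => hy _) hv

theorem isLatticePyramid_iff {P : Set (Fin N → ℝ)} : IsLatticePyramid P ↔
    (∃ x, IsLatticePt x ∧ P = {x}) ∨ ∃ v B α, IsCayleyDecomposition P {v} B α := by
  refine or_congr_right ⟨?_, ?_⟩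
  · rintro ⟨m, Q, hQ, hPQ⟩
    obtain ⟨A, B, α, h, ⟨f, -, rfl, -⟩, -⟩ :=
      (isCayleyDecomposition_pyramidOver hQ).exists_of_latticeIso hPQ.symm
    rw [Set.image_singleton] at h
    exact ⟨_, B, α, h⟩
  · rintro ⟨v, B, α, h⟩
    have hv := isLatticePolytope_singleton_iff.1 h.isLatticePolytope_left
    refine ⟨N, _, ?_, h.latticeIso_pyramidOver⟩
    refine h.isLatticePolytope_right.image (f := (AffineEquiv.constVAdd ℝ _ (-v)).toAffineMap)
      fun b _ hb => ?_
    simpa [neg_add_eq_sub] using hb.sub hv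

end Models

section Reduction

variable {N : ℕ} {P F G Φ B : Set (Fin N → ℝ)} {α : (Fin N → ℝ) →ᵃ[ℝ] ℝ} {x v : Fin N → ℝ}
  {r : ℕ}

/-- The conditions of `IsReducibleWith` for factors that lie inside the polytope: the join condition
on dimensions becomes the disjointness of the directions of the factors. -/
structure IsReduction (P F G : Set (Fin N → ℝ)) (α : (Fin N → ℝ) →ᵃ[ℝ] ℝ) : Prop extends
    IsCayleyDecomposition P F G α where
  disjoint : Disjoint (vectorSpan ℝ F) (vectorSpan ℝ G)
  polyCodeg_add : polyCodeg F + polyCodeg G = polyCodeg P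

theorem IsCayleyDecomposition.polyDim_eq_add_iff_disjoint (h : IsCayleyDecomposition P F G α) :
    polyDim P = polyDim F + polyDim G + 1 ↔ Disjoint (vectorSpan ℝ F) (vectorSpan ℝ G) := by
  rw [h.eq_convexHull, polyDim_convexHull]
  exact polyDim_union_eq_add_iff_disjoint one_ne_zero h.isLatticePolytope_left.nonempty
    h.isLatticePolytope_right.nonempty h.eq_one h.eq_zero

theorem IsReducibleWith.exists_isReduction {n : ℕ} {F₀ G₀ : Set (Fin n → ℝ)}
    (h : IsReducibleWith P F₀ G₀) (hF : IsLatticePolytope F₀) (hG : IsLatticePolytope G₀) :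
    ∃ F G α, IsReduction P F G α := by
  obtain ⟨⟨hiso, hdim⟩, hcodeg⟩ := h
  have hmodel := isCayleyDecomposition_cayleyTwo hF hG
  obtain ⟨F, G, α, hP, hF', hG'⟩ := hmodel.exists_of_latticeIso hiso.symm
  have hF₀ := latticeIso_append (F := F₀) isLatticePt_one_zero
  have hG₀ := latticeIso_append (F := G₀) isLatticePt_zero_one
  refine ⟨F, G, α, hP, hP.polyDim_eq_add_iff_disjoint.1 ?_, ?_⟩
  · rw [← hF'.polyDim_eq, ← hG'.polyDim_eq, ← hF₀.polyDim_eq, ← hG₀.polyDim_eq, hdim]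
  · rw [← hF'.polyCodeg_eq hmodel.isLatticePolytope_left,
      ← hG'.polyCodeg_eq hmodel.isLatticePolytope_right, ← hF₀.polyCodeg_eq hF,
      ← hG₀.polyCodeg_eq hG, hcodeg]

namespace IsReduction

theorem symm (h : IsReduction P F G α) : IsReduction P G F (AffineMap.const ℝ _ 1 - α) where
  toIsCayleyDecomposition := h.toIsCayleyDecomposition.symm
  disjoint := h.disjoint.symm
  polyCodeg_add := by rw [add_comm, h.polyCodeg_add]

theorem polyDim_eq (h : IsReduction P F G α) : polyDim P = polyDim F + polyDim G + 1 :=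
  h.polyDim_eq_add_iff_disjoint.2 h.disjoint

theorem isFacet_convexHull_union (h : IsReduction P F G α) (hΦ : IsFacet F Φ) :
    IsFacet P (convexHull ℝ (Φ ∪ G)) := by
  have hG := h.isLatticePolytope_right.nonempty
  obtain ⟨hΦne, hdim, φ, hφ, hΦφ⟩ := isFacet_iff_exists_affineMap.1 hΦ
  obtain ⟨ψ, hψF, hψG⟩ := exists_affineMap_eqOn_and_eq_zero h.disjoint
    h.isLatticePolytope_left.nonempty hG h.eq_one h.eq_zero φ
  have hψ : ∀ v ∈ F ∪ G, 0 ≤ ψ v := by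
    rintro v (hv | hv)
    exacts [hψF v hv ▸ hφ v hv, (hψG v hv).ge]
  have hzeros : {v ∈ F ∪ G | ψ v = 0} = Φ ∪ G := by
    rw [hΦφ]
    ext v
    have hF := hψF v
    have hG := hψG v
    simp only [Set.mem_ofPred_eq, Set.mem_union]
    grind
  have hΦα : ∀ v ∈ Φ, α v = 1 := fun v hv => h.eq_one v (hΦ.subset hv)
  have hdisjoint : Disjoint (vectorSpan ℝ Φ) (vectorSpan ℝ G) :=
    h.disjoint.mono_left (vectorSpan_mono ℝ hΦ.subset)
  refine isFacet_iff_exists_affineMap.2 ⟨(hG.inr).convexHull, ?_, ψ, ?_, ?_⟩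
  · rw [polyDim_convexHull, h.polyDim_eq, ← hdim,
      (polyDim_union_eq_add_iff_disjoint one_ne_zero hΦne hG hΦα h.eq_zero).2 hdisjoint]
    omega
  · rw [h.eq_convexHull]
    exact nonneg_on_convexHull hψ
  · rw [h.eq_convexHull, convexHull_inter_zeros hψ, hzeros]

theorem eq_add_of_isGorensteinCenter (h : IsReduction P F G α) (hr : 0 < r)
    (hP : IsGorensteinCenter P r x) {a b : Fin N → ℝ}
    (ha : a ∈ intrinsicInterior ℝ ((polyCodeg F : ℝ) • F)) (hal : IsLatticePt a)
    (hb : b ∈ intrinsicInterior ℝ ((polyCodeg G : ℝ) • G)) (hbl : IsLatticePt b) :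
    r = polyCodeg F + polyCodeg G ∧ x = a + b := by
  have hF := h.isLatticePolytope_left
  have hG := h.isLatticePolytope_right
  have hmem : a + b ∈ intrinsicInterior ℝ (((polyCodeg F : ℝ) + polyCodeg G) • P) :=
    h.eq_convexHull ▸ hF.add_mem_intrinsicInterior_convexHull_union hG
      (by exact_mod_cast hF.polyCodeg_pos) (by exact_mod_cast hG.polyCodeg_pos) ha hb
  obtain ⟨k, rfl⟩ := Nat.exists_eq_add_of_le
    (polyCodeg_le hr hP.mem_intrinsicInterior hP.isLatticePt)
  have hcenter : ∀ p ∈ P, IsLatticePt p → a + b + (k : ℝ) • p = x := fun p hp hpl => by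
    refine hP.eq_of_mem_intrinsicInterior h.isLatticePolytope hr ?_
      ((hal.add hbl).add (hpl.natCast_smul k))
    rw [← h.polyCodeg_add, Nat.cast_add, Nat.cast_add]
    exact h.isLatticePolytope.add_smul_mem_intrinsicInterior
      (by exact_mod_cast Nat.add_pos_left hF.polyCodeg_pos _) hmem hp k
  obtain ⟨f, hf, hfl⟩ := hF.exists_isLatticePt_mem
  obtain ⟨g, hg, hgl⟩ := hG.exists_isLatticePt_mem
  have hfg : f ≠ g := fun heq => one_ne_zero ((h.eq_one f hf).symm.trans (heq ▸ h.eq_zero g hg))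
  have hk : k = 0 := by
    by_contra hk
    refine hfg (smul_right_injective _ (Nat.cast_ne_zero (R := ℝ).2 hk) ?_)
    exact add_left_cancel <|
      (hcenter f (h.left_subset hf) hfl).trans (hcenter g (h.right_subset hg) hgl).symm
  subst hk
  exact ⟨h.polyCodeg_add.symm, by simpa using (hcenter f (h.left_subset hf) hfl).symm⟩

theorem exists_functional (h : IsReduction P F G α) (hP : IsGorenstein P)
    (hx : x ∈ intrinsicInterior ℝ ((polyCodeg F : ℝ) • F)) (hxl : IsLatticePt x)
    (hΦ : IsFacet F Φ) : ∃ (L : (Fin N → ℝ) →ₗ[ℝ] ℝ) (κ : ℝ),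
      IsIntegralOnSubmodule (vectorSpan ℝ P) L ∧ (∀ q ∈ Φ ∪ G, L q = κ) ∧
        L x = polyCodeg F * κ + 1 := by
  obtain ⟨r, hr, z, hz⟩ := isGorenstein_iff.1 hP
  obtain ⟨y, hy, hyl⟩ := h.isLatticePolytope_right.exists_isLatticePt_mem_intrinsicInterior
  obtain ⟨rfl, rfl⟩ := h.eq_add_of_isGorensteinCenter hr hz hx hxl hy hyl
  obtain ⟨L, hL, hLz⟩ := hz.exists_functional _ (h.isFacet_convexHull_union hΦ)
  have hLΦG : ∀ q ∈ Φ ∪ G, L (x + y) = (polyCodeg F + polyCodeg G : ℕ) * L q + 1 :=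
    fun q hq => hLz q (subset_convexHull ℝ _ hq)
  obtain ⟨g, hg, rfl⟩ := Set.mem_smul_set.1 (intrinsicInterior_subset hy)
  have hLg := hLΦG g (Or.inr hg)
  refine ⟨L, L g, hL, fun q hq => mul_left_cancel₀ (Nat.cast_ne_zero.2 hr.ne')
    (add_right_cancel ((hLΦG q hq).symm.trans hLg)), ?_⟩
  rw [map_add, map_smul, smul_eq_mul] at hLg
  push_cast at hLg
  linarith

theorem isGorenstein_left (h : IsReduction P F G α) (hP : IsGorenstein P) : IsGorenstein F := by
  obtain ⟨x, hx, hxl⟩ := h.isLatticePolytope_left.exists_isLatticePt_mem_intrinsicInterior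
  refine isGorenstein_iff.2 ⟨polyCodeg F, h.isLatticePolytope_left.polyCodeg_pos, x, hx, hxl,
    fun Φ hΦ => ?_⟩
  obtain ⟨L, κ, hL, hLΦ, hLx⟩ := h.exists_functional hP hx hxl hΦ
  exact ⟨L, hL.mono (vectorSpan_mono ℝ h.left_subset), fun q hq => hLΦ q (Or.inl hq) ▸ hLx⟩

end IsReduction

theorem IsCayleyDecomposition.isFacet_right (h : IsCayleyDecomposition P {v} B α) :
    IsFacet P B := by
  have hB := h.isLatticePolytope_right
  have hv : α v ≠ 0 := by rw [h.eq_one v rfl]; exact one_ne_zero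
  have hzeros : {w ∈ {v} ∪ B | α w = 0} = B := Set.ext fun w =>
    ⟨fun ⟨hw, hw0⟩ => hw.resolve_left fun hwv => hv (hwv ▸ hw0),
      fun hw => ⟨Or.inr hw, h.eq_zero w hw⟩⟩
  refine isFacet_iff_exists_affineMap.2 ⟨hB.nonempty, ?_, α, h.nonneg, ?_⟩
  · rw [h.eq_convexHull, polyDim_convexHull, ← Set.insert_eq,
      polyDim_insert hB.nonempty (notMem_affineSpan_of_eq_zero h.eq_zero hv)]
  · have hnonneg : ∀ w ∈ {v} ∪ B, 0 ≤ α w := fun w hw =>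
      h.nonneg w (h.eq_convexHull ▸ subset_convexHull ℝ _ hw)
    rw [h.eq_convexHull, convexHull_inter_zeros hnonneg, hzeros, hB.convex.convexHull_eq]

theorem IsIntegralOn.exists_int_mul_eq {p : Fin N → ℝ} (hα : IsIntegralOn P α) (hx : x ∈ P)
    (hxl : IsLatticePt x) (hαx : α x = 0) (hp : p ∈ P) (hpl : IsLatticePt ((r : ℝ) • p)) :
    ∃ m : ℤ, r * α p = m := by
  have hxP := subset_affineSpan ℝ P hx
  have hmem : (r : ℝ) • (p -ᵥ x) +ᵥ x ∈ affineSpan ℝ P :=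
    AffineSubspace.vadd_mem_of_mem_direction (Submodule.smul_mem _ _
      (AffineSubspace.vsub_mem_direction (subset_affineSpan ℝ P hp) hxP)) hxP
  rw [vadd_eq_add, vsub_eq_sub, add_comm] at hmem
  obtain ⟨m, hm⟩ := hα _ hmem (by
    rw [smul_sub]
    exact hxl.add (hpl.sub (hxl.natCast_smul r)))
  exact ⟨m, by rw [← hm, affineMap_add_smul_sub, hαx, zero_add, sub_zero]⟩

theorem IsCayleyDecomposition.exists_int_apex_eq_add (h : IsCayleyDecomposition P {v} B α)
    {L : (Fin N → ℝ) →ₗ[ℝ] ℝ} {κ : ℝ} (hL : IsIntegralOnSubmodule (vectorSpan ℝ P) L)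
    (hLB : ∀ q ∈ B, L q = κ) (hx : x ∈ (r : ℝ) • P) (hxl : IsLatticePt x)
    (hLx : L x = r * κ + 1) : ∃ c : ℤ, c * c = 1 ∧ L v = κ + c := by
  have hv := isLatticePolytope_singleton_iff.1 h.isLatticePolytope_left
  obtain ⟨b, hb, hbl⟩ := h.isLatticePolytope_right.exists_isLatticePt_mem
  have hbP := h.right_subset hb
  obtain ⟨p, hp, rfl⟩ := Set.mem_smul_set.1 hx
  obtain ⟨c, hc⟩ := hL (v - b) (vsub_mem_vectorSpan ℝ (h.left_subset rfl) hbP) (hv.sub hbl)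
  rw [map_sub, hLB b hb] at hc
  have hproportional : L p - κ = c * α p := by
    refine AffineMap.eqOn_affineSpan (s := {v} ∪ B)
      (f := L.toAffineMap - AffineMap.const ℝ _ κ) (g := (c : ℝ) • α) ?_ ?_
    · rintro w (rfl | hw)
      · simp [h.eq_one w rfl, hc]
      · simp [h.eq_zero w hw, hLB w hw]
    · rw [← affineSpan_convexHull, ← h.eq_convexHull]
      exact subset_affineSpan ℝ P hp
  obtain ⟨m, hm⟩ := h.isIntegralOn.exists_int_mul_eq hbP hbl (h.eq_zero b hb) hp hxl
  have hcm : c * m = 1 := by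
    rw [map_smul, smul_eq_mul] at hLx
    have : (c : ℝ) * m = 1 := by
      rw [← hm]
      linear_combination hLx - r * hproportional
    exact_mod_cast this
  refine ⟨c, ?_, by linarith⟩
  obtain rfl | rfl := Int.isUnit_iff.1 (IsUnit.of_mul_eq_one m hcm) <;> rfl

theorem IsReduction.isLatticePyramid (h : IsReduction P F G α) (hP : IsGorenstein P)
    (hF : IsLatticePyramid F) : IsLatticePyramid P := by
  refine isLatticePyramid_iff.2 (Or.inr ?_)
  obtain ⟨v, -, rfl⟩ | ⟨v, B, β, hβ⟩ := isLatticePyramid_iff.1 hF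
  · exact ⟨v, G, α, h.toIsCayleyDecomposition⟩
  obtain ⟨x, hx, hxl⟩ := h.isLatticePolytope_left.exists_isLatticePt_mem_intrinsicInterior
  obtain ⟨L, κ, hL, hLB, hLx⟩ := h.exists_functional hP hx hxl hβ.isFacet_right
  obtain ⟨c, hcc, hc⟩ := hβ.exists_int_apex_eq_add
    (hL.mono (vectorSpan_mono ℝ h.left_subset)) (fun q hq => hLB q (Or.inl hq))
    (intrinsicInterior_subset hx) hxl hLx
  obtain ⟨g, hg, hgl⟩ := h.isLatticePolytope_right.exists_isLatticePt_mem
  obtain rfl := hLB g (Or.inr hg)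
  let φ := L.toAffineMap - AffineMap.const ℝ _ (L g)
  have hφ : IsIntegralOn P φ :=
    isIntegralOn_toAffineMap_sub_const hL (subset_affineSpan ℝ P (h.right_subset hg)) hgl
  refine ⟨v, convexHull ℝ (B ∪ G), (c : ℝ) • φ, hβ.isLatticePolytope_left,
    hβ.isLatticePolytope_right.convexHull_union h.isLatticePolytope_right, ?_,
    fun y hy hyl => ?_, ?_, ?_⟩
  · rw [h.eq_convexHull, hβ.eq_convexHull, convexHull_convexHull_union_left,
      convexHull_convexHull_union_right, Set.union_assoc]
  · obtain ⟨z, hz⟩ := hφ y hy hyl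
    exact ⟨c * z, by simp [hz]⟩
  · rintro _ rfl
    simpa [φ, hc] using mod_cast hcc
  · refine eq_zero_on_convexHull fun q hq => ?_
    simp [φ, hLB q hq]

theorem IsReduction.mul_polyDeg_le_left_or_right (h : IsReduction P F G α) {k : ℕ}
    (hk : k * polyDeg P ≤ polyDim P) :
    k * polyDeg F ≤ polyDim F ∨ k * polyDeg G ≤ polyDim G := by
  by_contra! hlt
  have hF : 0 < polyDeg F := Nat.pos_of_mul_pos_left (Nat.zero_lt_of_lt hlt.1)
  have hG : 0 < polyDeg G := Nat.pos_of_mul_pos_left (Nat.zero_lt_of_lt hlt.2)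
  have hdeg : polyDeg P = polyDeg F + polyDeg G := by
    have := h.polyCodeg_add
    have := h.polyDim_eq
    unfold polyDeg at *
    omega
  rw [hdeg, mul_add, h.polyDim_eq] at hk
  omega

end Reduction

theorem stmt6_general {N : ℕ} (k : ℕ)
    (H : ∀ P : Set (Fin N → ℝ), IsLatticePolytope P → IsGorenstein P → ¬ IsReducible P →
      k * polyDeg P ≤ polyDim P → IsLatticePyramid P) (P : Set (Fin N → ℝ))
    (hP : IsLatticePolytope P) (hG : IsGorenstein P) (hk : k * polyDeg P ≤ polyDim P) :
    IsLatticePyramid P := by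
  induction hd : polyDim P using Nat.strong_induction_on generalizing P with
  | _ d ih =>
    by_cases hred : IsReducible P
    · obtain hpoint | ⟨n, F₀, G₀, hF₀, hG₀, hjoin⟩ := hred
      · exact Or.inl hpoint
      have hfactor : ∀ {F G α}, IsReduction P F G α → k * polyDeg F ≤ polyDim F →
          IsLatticePyramid P := fun {F G α} h hF =>
        h.isLatticePyramid hG (ih _ (by have := h.polyDim_eq; omega) F h.isLatticePolytope_left
          (h.isGorenstein_left hG) hF rfl)
      obtain ⟨F, G, α, h⟩ := hjoin.exists_isReduction hF₀ hG₀
      exact (h.mul_polyDeg_le_left_or_right hk).elim (hfactor h) (hfactor h.symm)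
    · exact H P hP hG hred hk

/-- If every irreducible Gorenstein polytope of dimension `d` and degree `s` with
`d ≥ 3s` is a lattice pyramid, then every Gorenstein polytope of dimension `d` and
degree `s` with `d ≥ 3s` is a lattice pyramid. -/
theorem stmt6
    (H : ∀ (N : ℕ) (P : Set (Fin N → ℝ)), IsLatticePolytope P → IsGorenstein P →
      ¬ IsReducible P → 3 * polyDeg P ≤ polyDim P → IsLatticePyramid P) :
    ∀ (N : ℕ) (P : Set (Fin N → ℝ)), IsLatticePolytope P → IsGorenstein P →
      3 * polyDeg P ≤ polyDim P → IsLatticePyramid P :=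
  fun N => stmt6_general 3 (H N)
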